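/- arXiv:1710.06193 — 4 statements merged into one kernel-verified Lean document; each statement's English description precedes it below -/
import Mathlib

section
/- Let φ be a smooth diffeomorphism of ℝ² preserving ω₀ and equal to the identity outside a compact set, and let λ be a smooth 1-form on ℝ² with dλ = ω₀. Then the 1-form φ*λ − λ is closed, and there exists a unique compactly supported smooth function σ : ℝ² → ℝ such that dσ = φ*λ − λ. -/
open MeasureTheory

noncomputable section

/-- The standard area form `ω₀ = dx ∧ dy` on `ℝ²`, as a bilinear pairing. -/
def omega0 (u v : ℝ × ℝ) : ℝ := u.1 * v.2 - u.2 * v.1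

/-- A 1-form on `ℝ²`, encoded as a map into the continuous linear functionals. -/
abbrev OneForm := (ℝ × ℝ) → ((ℝ × ℝ) →L[ℝ] ℝ)

/-- `l` is a smooth primitive of `ω₀`: a smooth 1-form with `dl = ω₀`. -/
def IsPrimitive (l : OneForm) : Prop :=
  ContDiff ℝ (⊤ : ℕ∞) l ∧ ∀ z u v, fderiv ℝ l z u v - fderiv ℝ l z v u = omega0 u v

/-- Pullback of a 1-form by a map: `(f*l)(z) = l (f z) ∘ Df(z)`. -/
def pullbackForm (f : ℝ × ℝ → ℝ × ℝ) (l : OneForm) : OneForm :=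
  fun z => (l (f z)).comp (fderiv ℝ f z)

/-- The group `Diff_c(ℝ², ω₀)` of smooth, compactly supported, area-preserving
diffeomorphisms of the plane. -/
structure DiffC where
  toFun : ℝ × ℝ → ℝ × ℝ
  invFun : ℝ × ℝ → ℝ × ℝ
  smooth : ContDiff ℝ (⊤ : ℕ∞) toFun
  smooth_inv : ContDiff ℝ (⊤ : ℕ∞) invFun
  left_inv : Function.LeftInverse invFun toFun
  right_inv : Function.RightInverse invFun toFun
  area : ∀ z u v, omega0 (fderiv ℝ toFun z u) (fderiv ℝ toFun z v) = omega0 u v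
  compact : ∃ K : Set (ℝ × ℝ), IsCompact K ∧ ∀ z ∉ K, toFun z = z

/-- `σ` is the action of `f` with respect to the primitive `l`: the unique compactly
supported smooth function with `dσ = f*l − l`. -/
def IsAction (f : ℝ × ℝ → ℝ × ℝ) (l : OneForm) (σ : ℝ × ℝ → ℝ) : Prop :=
  ContDiff ℝ (⊤ : ℕ∞) σ ∧ HasCompactSupport σ ∧
    ∀ z, fderiv ℝ σ z = pullbackForm f l z - l z

/-!
The pullback `f*l` and `l` have the same exterior derivative when `f` preserves `dl`, and they agree
where `f` is the identity, so `f*l - l` is a closed 1-form with compact support. By the Poincaré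
lemma it has a primitive, which is constant on the complement of a large ball because this
complement is connected in dimension at least two. Subtracting the constant gives compact support.
-/

section OneForms

variable {𝕜 E E' F : Type*} [NontriviallyNormedField 𝕜] [NormedAddCommGroup E] [NormedSpace 𝕜 E]
  [NormedAddCommGroup E'] [NormedSpace 𝕜 E'] [NormedAddCommGroup F] [NormedSpace 𝕜 F]

/-- The pullback `f*ω` of an `F`-valued 1-form on `E'` along a map `f : E → E'`, extending
`pullbackForm` beyond the plane. -/
def pullbackOneForm (f : E → E') (ω : E' → E' →L[𝕜] F) (z : E) : E →L[𝕜] F :=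
  (ω (f z)).comp (fderiv 𝕜 f z)

/-- The exterior derivative `dω` of a 1-form, as a function of a point and two tangent vectors.
It is the convention of `IsPrimitive`; unlike Mathlib's `extDeriv`, it takes 1-forms valued in
continuous linear maps. -/
def extDerivOneForm (ω : E → E →L[𝕜] F) (z u v : E) : F :=
  fderiv 𝕜 ω z u v - fderiv 𝕜 ω z v u

theorem extDerivOneForm_sub {ω η : E → E →L[𝕜] F} {z : E} (hω : DifferentiableAt 𝕜 ω z)
    (hη : DifferentiableAt 𝕜 η z) (u v : E) :
    extDerivOneForm (fun w => ω w - η w) z u v =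
      extDerivOneForm ω z u v - extDerivOneForm η z u v := by
  simp only [extDerivOneForm, fderiv_fun_sub hω hη, sub_apply]
  abel

theorem extDerivOneForm_pullbackOneForm {f : E → E'} {ω : E' → E' →L[𝕜] F} {z : E}
    (hω : DifferentiableAt 𝕜 ω (f z)) (hf : DifferentiableAt 𝕜 f z)
    (hf' : DifferentiableAt 𝕜 (fderiv 𝕜 f) z) (hsymm : IsSymmSndFDerivAt 𝕜 f z) (u v : E) :
    extDerivOneForm (pullbackOneForm f ω) z u v =
      extDerivOneForm ω (f z) (fderiv 𝕜 f z u) (fderiv 𝕜 f z v) := by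
  have hpull : HasFDerivAt (pullbackOneForm f ω) _ z :=
    (hω.hasFDerivAt.comp z hf.hasFDerivAt).clm_comp hf'.hasFDerivAt
  simp only [extDerivOneForm, hpull.fderiv, add_apply,
    ContinuousLinearMap.comp_apply, ContinuousLinearMap.compL_apply,
    ContinuousLinearMap.flip_apply, Function.comp_apply, hsymm.eq u v]
  abel

theorem contDiff_pullbackOneForm {n : WithTop ℕ∞} {f : E → E'} {ω : E' → E' →L[𝕜] F}
    (hf : ContDiff 𝕜 (n + 1) f) (hω : ContDiff 𝕜 n ω) : ContDiff 𝕜 n (pullbackOneForm f ω) :=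
  (hω.comp (hf.of_le le_self_add)).clm_comp (hf.fderiv_right le_rfl)

theorem hasCompactSupport_pullbackOneForm_sub {f : E → E}
    (hf : HasCompactSupport fun z => f z - z) (ω : E → E →L[𝕜] F) :
    HasCompactSupport fun z => pullbackOneForm f ω z - ω z := by
  refine hf.mono' (Function.support_subset_iff'.2 fun z hz => ?_)
  have hfz : f =ᶠ[nhds z] id :=
    (notMem_tsupport_iff_eventuallyEq.1 hz).mono fun w hw => sub_eq_zero.1 hw
  rw [pullbackOneForm, hfz.fderiv_eq, hfz.eq_of_nhds, fderiv_id, ContinuousLinearMap.comp_id,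
    id_eq, sub_self]

end OneForms

section Primitives

variable {E F : Type*} [NormedAddCommGroup E] [NormedSpace ℝ E]
  [NormedAddCommGroup F] [NormedSpace ℝ F]

theorem isPreconnected_compl_closedBall (hE : 1 < Module.rank ℝ E) (x : E) (r : ℝ) :
    IsPreconnected (Metric.closedBall x r)ᶜ := by
  rcases lt_or_ge r 0 with hr | hr
  · have := (convex_univ : Convex ℝ (Set.univ : Set E)).isPreconnected
    rwa [Metric.closedBall_eq_empty.2 hr, Set.compl_empty]
  have hpolar : (Metric.closedBall x r)ᶜ =
      (fun p : ℝ × E => x + p.1 • p.2) '' (Set.Ioi r ×ˢ Metric.sphere 0 1) := by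
    ext w
    simp only [Set.mem_compl_iff, mem_closedBall_iff_norm, not_le, Set.mem_image, Set.mem_prod,
      Set.mem_Ioi, mem_sphere_zero_iff_norm, Prod.exists]
    constructor
    · intro hw
      have hne : ‖w - x‖ ≠ 0 := (hr.trans_lt hw).ne'
      refine ⟨‖w - x‖, ‖w - x‖⁻¹ • (w - x), ⟨hw, ?_⟩, ?_⟩
      · rw [norm_smul, norm_inv, norm_norm, inv_mul_cancel₀ hne]
      · rw [smul_inv_smul₀ hne, add_sub_cancel]
    · rintro ⟨t, u, ⟨ht, hu⟩, rfl⟩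
      rwa [add_sub_cancel_left, norm_smul, hu, mul_one, Real.norm_of_nonneg (hr.trans ht.le)]
  rw [hpolar]
  exact (isPreconnected_Ioi.prod (isPreconnected_sphere hE 0 1)).image _ (by fun_prop)

theorem exists_hasCompactSupport_sub_const [ProperSpace E] (hE : 1 < Module.rank ℝ E)
    {f : E → F} (hf : Differentiable ℝ f) (hf' : HasCompactSupport (fderiv ℝ f)) :
    ∃ c, HasCompactSupport fun z => f z - c := by
  obtain ⟨r, hr⟩ := hf'.isCompact.isBounded.subset_closedBall 0
  obtain ⟨c, hc⟩ := Metric.isClosed_closedBall.isOpen_compl.exists_is_const_of_fderiv_eq_zero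
    (isPreconnected_compl_closedBall hE 0 r) hf.differentiableOn
    fun z hz => image_eq_zero_of_notMem_tsupport fun h => hz (hr h)
  exact ⟨c, .intro (isCompact_closedBall 0 r) fun z hz => sub_eq_zero.2 (hc z hz)⟩

theorem eq_of_fderiv_eq_of_hasCompactSupport [Nontrivial E] {f g : E → F}
    (hf : Differentiable ℝ f) (hg : Differentiable ℝ g) (hfc : HasCompactSupport f)
    (hgc : HasCompactSupport g) (hfg : ∀ z, fderiv ℝ f z = fderiv ℝ g z) : f = g := by
  have : NoncompactSpace E := NormedSpace.noncompactSpace ℝ E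
  obtain ⟨p, hp⟩ :=
    (Set.ne_univ_iff_exists_notMem _).1 (hfc.isCompact.union hgc.isCompact).ne_univ
  rw [Set.mem_union, not_or] at hp
  refine eq_of_fderiv_eq hf hg hfg p ?_
  rw [image_eq_zero_of_notMem_tsupport hp.1, image_eq_zero_of_notMem_tsupport hp.2]

theorem exists_hasCompactSupport_hasFDerivAt [CompleteSpace F] (hE : 1 < Module.rank ℝ E)
    {ω : E → E →L[ℝ] F} (hω : Differentiable ℝ ω) (hωc : HasCompactSupport ω)
    (hclosed : ∀ z u v, fderiv ℝ ω z u v = fderiv ℝ ω z v u) :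
    ∃ σ : E → F, HasCompactSupport σ ∧ ∀ z, HasFDerivAt σ (ω z) z := by
  rcases hωc.eq_zero_or_finiteDimensional ℝ hω.continuous with rfl | _
  · exact ⟨0, .zero, fun z => hasFDerivAt_const 0 z⟩
  have : ProperSpace E := FiniteDimensional.proper_real E
  obtain ⟨f, hf⟩ := convex_univ.exists_forall_hasFDerivAt_of_fderiv_symmetric isOpen_univ
    hω.differentiableOn fun z _ => hclosed z
  replace hf : ∀ z, HasFDerivAt f (ω z) z := fun z => hf z (Set.mem_univ z)
  have hfω : fderiv ℝ f = ω := funext fun z => (hf z).fderiv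
  obtain ⟨c, hc⟩ := exists_hasCompactSupport_sub_const hE
    (fun z => (hf z).differentiableAt) (hfω ▸ hωc)
  exact ⟨fun z => f z - c, hc, fun z => (hf z).sub_const c⟩

theorem existsUnique_hasCompactSupport_fderiv_eq [CompleteSpace F] (hE : 1 < Module.rank ℝ E)
    {n : ℕ∞} (hn : n ≠ 0) {ω : E → E →L[ℝ] F} (hω : ContDiff ℝ n ω) (hωc : HasCompactSupport ω)
    (hclosed : ∀ z u v, fderiv ℝ ω z u v = fderiv ℝ ω z v u) :
    ∃! σ : E → F, ContDiff ℝ (n + 1) σ ∧ HasCompactSupport σ ∧ ∀ z, fderiv ℝ σ z = ω z := by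
  have : Nontrivial E := rank_pos_iff_nontrivial.1 (zero_lt_one.trans hE)
  obtain ⟨σ, hσc, hσ⟩ := exists_hasCompactSupport_hasFDerivAt hE
    (hω.differentiable (by exact_mod_cast hn)) hωc hclosed
  have hσd : Differentiable ℝ σ := fun z => (hσ z).differentiableAt
  have hσω : fderiv ℝ σ = ω := funext fun z => (hσ z).fderiv
  refine ⟨σ, ⟨contDiff_succ_iff_fderiv.2 ⟨hσd, by simp, hσω ▸ hω⟩, hσc, congrFun hσω⟩, ?_⟩
  rintro τ ⟨hτ, hτc, hτω⟩
  exact eq_of_fderiv_eq_of_hasCompactSupport (hτ.differentiable (by simp)) hσd hτc hσc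
    fun z => (hτω z).trans (congrFun hσω z).symm

theorem fderiv_pullbackOneForm_sub_symm {f : E → E} {l : E → E →L[ℝ] F} (hf : ContDiff ℝ 2 f)
    (hl : Differentiable ℝ l)
    (hfl : ∀ z u v,
      extDerivOneForm l (f z) (fderiv ℝ f z u) (fderiv ℝ f z v) = extDerivOneForm l z u v)
    (z u v : E) :
    fderiv ℝ (fun w => pullbackOneForm f l w - l w) z u v =
      fderiv ℝ (fun w => pullbackOneForm f l w - l w) z v u := by
  have hfd : Differentiable ℝ f := hf.differentiable two_ne_zero
  have hfd' : Differentiable ℝ (fderiv ℝ f) :=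
    (hf.fderiv_right (m := 1) (by norm_num)).differentiable one_ne_zero
  have hpull : Differentiable ℝ (pullbackOneForm f l) := (hl.comp hfd).clm_comp hfd'
  have hsymm : IsSymmSndFDerivAt ℝ f z := hf.contDiffAt.isSymmSndFDerivAt (by simp)
  rw [← sub_eq_zero]
  calc extDerivOneForm (fun w => pullbackOneForm f l w - l w) z u v
      = extDerivOneForm (pullbackOneForm f l) z u v - extDerivOneForm l z u v :=
        extDerivOneForm_sub (hpull z) (hl z) u v
    _ = 0 := by
        rw [extDerivOneForm_pullbackOneForm (hl (f z)) (hfd z) (hfd' z) hsymm, hfl, sub_self]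

theorem statement0_general [CompleteSpace F] (hE : 1 < Module.rank ℝ E) {n : ℕ∞} (hn : n ≠ 0)
    {f : E → E} {l : E → E →L[ℝ] F} (hf : ContDiff ℝ (n + 1) f) (hl : ContDiff ℝ n l)
    (hfc : HasCompactSupport fun z => f z - z)
    (hfl : ∀ z u v,
      extDerivOneForm l (f z) (fderiv ℝ f z u) (fderiv ℝ f z v) = extDerivOneForm l z u v) :
    (∀ z u v,
      fderiv ℝ (fun w => pullbackOneForm f l w - l w) z u v =
        fderiv ℝ (fun w => pullbackOneForm f l w - l w) z v u) ∧
    (∃! σ : E → F, ContDiff ℝ (n + 1) σ ∧ HasCompactSupport σ ∧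
      ∀ z, fderiv ℝ σ z = pullbackOneForm f l z - l z) := by
  have hn1 : (1 : WithTop ℕ∞) ≤ n := by exact_mod_cast Order.one_le_iff_ne_zero.2 hn
  have hf2 : ContDiff ℝ 2 f := hf.of_le (one_add_one_eq_two.symm.trans_le (by gcongr))
  have hclosed := fderiv_pullbackOneForm_sub_symm hf2
    (hl.differentiable (by exact_mod_cast hn)) hfl
  exact ⟨hclosed, existsUnique_hasCompactSupport_fderiv_eq hE hn
    ((contDiff_pullbackOneForm hf hl).sub hl) (hasCompactSupport_pullbackOneForm_sub hfc l)
    hclosed⟩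

end Primitives

theorem DiffC.hasCompactSupport_sub_id (φ : DiffC) :
    HasCompactSupport fun z => φ.toFun z - z :=
  let ⟨_, hK, hφ⟩ := φ.compact
  .intro hK fun z hz => sub_eq_zero.2 (hφ z hz)

theorem IsPrimitive.extDerivOneForm_eq {l : OneForm} (hl : IsPrimitive l) :
    extDerivOneForm l = fun _ => omega0 :=
  funext fun z => funext₂ (hl.2 z)

/-- For `φ ∈ Diff_c(ℝ²,ω₀)` and a smooth primitive `λ` of `ω₀`, the 1-form `φ*λ − λ`
is closed, and there is a unique compactly supported smooth `σ` with `dσ = φ*λ − λ`. -/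
theorem statement0 (φ : DiffC) (l : OneForm) (hl : IsPrimitive l) :
    (∀ z u v,
      fderiv ℝ (fun w => pullbackForm φ.toFun l w - l w) z u v =
        fderiv ℝ (fun w => pullbackForm φ.toFun l w - l w) z v u) ∧
    (∃! σ : ℝ × ℝ → ℝ, ContDiff ℝ (⊤ : ℕ∞) σ ∧ HasCompactSupport σ ∧
      ∀ z, fderiv ℝ σ z = pullbackForm φ.toFun l z - l z) := by
  have hrank : 1 < Module.rank ℝ (ℝ × ℝ) := Module.one_lt_rank_of_one_lt_finrank (by simp)
  exact statement0_general hrank ENat.top_ne_zero φ.smooth hl.1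
    φ.hasCompactSupport_sub_id (by simpa only [hl.extDerivOneForm_eq] using φ.area)
end
end

section
/- Let φ ∈ Diff_c(ℝ²,ω₀). Then for any two smooth primitives λ and λ' of ω₀ the integrals of the corresponding actions over ℝ² agree: ∫_{ℝ²} σ_{φ,λ} dx dy = ∫_{ℝ²} σ_{φ,λ'} dx dy. Consequently the Calabi invariant CAL(φ) = ∫_{ℝ²} σ_{φ,λ} dx dy is well defined, independent of the choice of primitive λ. -/
/-!
The difference `l - l'` of two primitives is closed, hence `l - l' = dh` for some function `h`.
Then `σ - σ'` and `h ∘ φ - h` are compactly supported functions with the same differential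
`φ*dh - dh`, so they agree. Although `h` need not be integrable, `h ∘ φ - h` vanishes off a compact
set `K` outside which `φ` is the identity; as `φ` preserves the measure, `φ⁻¹(K)` is `K` up to a
null set, so the integrals of `h ∘ φ` and `h` over `K` cancel.
-/

open MeasureTheory

noncomputable section

open Set

section MeasurePreserving

variable {α F : Type*} {f : α → α} {K : Set α}

lemma preimage_subset_of_eqOn_id_compl (hfK : EqOn f id Kᶜ) : f ⁻¹' K ⊆ K := by
  intro x hx
  by_contra hxK
  exact hxK (by simpa only [mem_preimage, hfK hxK, id] using hx)

variable [MeasurableSpace α] {μ : Measure α}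

lemma preimage_ae_eq_of_eqOn_id_compl (hf : MeasurePreserving f μ μ)
    (hK : NullMeasurableSet K μ) (hμK : μ K ≠ ⊤) (hfK : EqOn f id Kᶜ) : f ⁻¹' K =ᵐ[μ] K :=
  ae_eq_of_subset_of_measure_ge (preimage_subset_of_eqOn_id_compl hfK)
    (hf.measure_preimage hK).ge (hK.preimage hf.quasiMeasurePreserving) hμK

lemma integral_comp_sub_eq_zero [NormedAddCommGroup F] [NormedSpace ℝ F]
    (hf : MeasurePreserving f μ μ) (hK : MeasurableSet K) (hμK : μ K ≠ ⊤) (hfK : EqOn f id Kᶜ)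
    {h : α → F} (hh : IntegrableOn h K μ) : ∫ x, (h (f x) - h x) ∂μ = 0 := by
  have hf_restrict : MeasurePreserving f (μ.restrict K) (μ.restrict K) := by
    have hpre := hf.restrict_preimage hK
    rwa [Measure.restrict_congr_set
      (preimage_ae_eq_of_eqOn_id_compl hf hK.nullMeasurableSet hμK hfK)] at hpre
  have hcomp : ∫ x in K, h (f x) ∂μ = ∫ x in K, h x ∂μ := by
    have hh_map : AEStronglyMeasurable h ((μ.restrict K).map f) := by
      rw [hf_restrict.map_eq]
      exact hh.aestronglyMeasurable
    rw [← integral_map hf_restrict.aemeasurable hh_map, hf_restrict.map_eq]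
  calc ∫ x, (h (f x) - h x) ∂μ
      = ∫ x in K, (h (f x) - h x) ∂μ :=
        (setIntegral_eq_integral_of_forall_compl_eq_zero fun x hx => by
          rw [hfK hx, id, sub_self]).symm
    _ = ∫ x in K, h (f x) ∂μ - ∫ x in K, h x ∂μ :=
        integral_sub (hf_restrict.integrable_comp_of_integrable hh) hh
    _ = 0 := by rw [hcomp, sub_self]

lemma measurePreserving_of_abs_det_eq_one {E : Type*} [NormedAddCommGroup E] [NormedSpace ℝ E]
    [FiniteDimensional ℝ E] [MeasurableSpace E] [BorelSpace E] (μ : Measure E) [μ.IsAddHaarMeasure]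
    {f : E → E} {f' : E → E →L[ℝ] E} (hf : ∀ x, HasFDerivAt f (f' x) x)
    (hbij : Function.Bijective f) (hdet : ∀ x, |(f' x).det| = 1) : MeasurePreserving f μ μ where
  measurable := (continuous_iff_continuousAt.2 fun x => (hf x).continuousAt).measurable
  map_eq := by
    simpa [hdet, hbij.surjective.range_eq] using
      map_withDensity_abs_det_fderiv_eq_addHaar μ nullMeasurableSet_univ
        (fun x _ => (hf x).hasFDerivWithinAt) hbij.injective.injOn

end MeasurePreserving

section CompactSupport

variable {E F : Type*} [NormedAddCommGroup F]

lemma hasCompactSupport_comp_sub [TopologicalSpace E] [R1Space E] {f : E → E} {K : Set E}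
    (hK : IsCompact K) (hfK : EqOn f id Kᶜ) (h : E → F) :
    HasCompactSupport fun x => h (f x) - h x :=
  HasCompactSupport.intro hK fun x hx => by rw [hfK hx, id, sub_self]

variable [NormedAddCommGroup E] [NormedSpace ℝ E] [NormedSpace ℝ F]

lemma eq_of_hasFDerivAt_of_hasCompactSupport [NoncompactSpace E] {g₁ g₂ : E → F}
    {g' : E → E →L[ℝ] F} (hg₁ : ∀ x, HasFDerivAt g₁ (g' x) x)
    (hg₂ : ∀ x, HasFDerivAt g₂ (g' x) x) (hsupp₁ : HasCompactSupport g₁)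
    (hsupp₂ : HasCompactSupport g₂) : g₁ = g₂ := by
  obtain ⟨p, hp⟩ : ∃ p, p ∉ tsupport g₁ ∪ tsupport g₂ :=
    (ne_univ_iff_exists_notMem _).1 (hsupp₁.isCompact.union hsupp₂.isCompact).ne_univ
  rw [mem_union, not_or] at hp
  refine eq_of_fderiv_eq (𝕜 := ℝ) (fun x => (hg₁ x).differentiableAt)
    (fun x => (hg₂ x).differentiableAt) (fun x => (hg₁ x).fderiv.trans (hg₂ x).fderiv.symm) p ?_
  rw [image_eq_zero_of_notMem_tsupport hp.1, image_eq_zero_of_notMem_tsupport hp.2]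

end CompactSupport

section Action

variable {E F : Type*} [NormedAddCommGroup E] [NormedSpace ℝ E] [NormedAddCommGroup F]
  [NormedSpace ℝ F]

lemma exists_hasFDerivAt_sub_of_eq_exterior_derivative [CompleteSpace F] {l l' : E → E →L[ℝ] F}
    (hl : Differentiable ℝ l) (hl' : Differentiable ℝ l')
    (hd : ∀ z u v, fderiv ℝ l z u v - fderiv ℝ l z v u =
      fderiv ℝ l' z u v - fderiv ℝ l' z v u) :
    ∃ h : E → F, ∀ z, HasFDerivAt h (l z - l' z) z := by
  have hclosed : ∀ z ∈ univ, ∀ u v,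
      fderiv ℝ (l - l') z u v = fderiv ℝ (l - l') z v u := fun z _ u v => by
    rw [fderiv_sub (hl z) (hl' z)]
    simpa only [sub_apply] using sub_eq_sub_iff_sub_eq_sub.1 (hd z u v)
  obtain ⟨h, hh⟩ := convex_univ.exists_forall_hasFDerivAt_of_fderiv_symmetric isOpen_univ
    (hl.sub hl').differentiableOn hclosed
  exact ⟨h, fun z => hh z (mem_univ z)⟩

lemma eq_comp_sub_of_hasFDerivAt [NoncompactSpace E] {f : E → E} (hf : Differentiable ℝ f)
    {K : Set E} (hK : IsCompact K) (hfK : EqOn f id Kᶜ) {h σ : E → F} {h' : E → E →L[ℝ] F}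
    (hh : ∀ z, HasFDerivAt h (h' z) z)
    (hσ : ∀ z, HasFDerivAt σ ((h' (f z)).comp (fderiv ℝ f z) - h' z) z)
    (hσc : HasCompactSupport σ) : σ = fun z => h (f z) - h z :=
  eq_of_hasFDerivAt_of_hasCompactSupport hσ
    (fun z => ((hh (f z)).comp z (hf z).hasFDerivAt).sub (hh z)) hσc
    (hasCompactSupport_comp_sub hK hfK h)

variable [NoncompactSpace E] [MeasurableSpace E] [BorelSpace E] {μ : Measure E}
  [IsFiniteMeasureOnCompacts μ] {f : E → E}

lemma integral_eq_zero_of_hasFDerivAt_comp_sub (hf : Differentiable ℝ f)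
    (hfμ : MeasurePreserving f μ μ) (hf_compact : ∃ K, IsCompact K ∧ EqOn f id Kᶜ)
    {h σ : E → F} {h' : E → E →L[ℝ] F} (hh : ∀ z, HasFDerivAt h (h' z) z)
    (hσ : ∀ z, HasFDerivAt σ ((h' (f z)).comp (fderiv ℝ f z) - h' z) z)
    (hσc : HasCompactSupport σ) : ∫ z, σ z ∂μ = 0 := by
  obtain ⟨K, hK, hfK⟩ := hf_compact
  have h_integrable : IntegrableOn h K μ :=
    ContinuousOn.integrableOn_compact hK fun z _ => (hh z).continuousAt.continuousWithinAt
  rw [eq_comp_sub_of_hasFDerivAt hf hK hfK hh hσ hσc]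
  exact integral_comp_sub_eq_zero hfμ hK.measurableSet hK.measure_ne_top hfK h_integrable

theorem statement7_general [CompleteSpace F] (hf : Differentiable ℝ f)
    (hfμ : MeasurePreserving f μ μ) (hf_compact : ∃ K, IsCompact K ∧ EqOn f id Kᶜ)
    {l l' : E → E →L[ℝ] F} (hl : Differentiable ℝ l) (hl' : Differentiable ℝ l')
    (hd : ∀ z u v, fderiv ℝ l z u v - fderiv ℝ l z v u =
      fderiv ℝ l' z u v - fderiv ℝ l' z v u)
    {σ σ' : E → F} (hσ : ∀ z, HasFDerivAt σ ((l (f z)).comp (fderiv ℝ f z) - l z) z)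
    (hσ' : ∀ z, HasFDerivAt σ' ((l' (f z)).comp (fderiv ℝ f z) - l' z) z)
    (hσc : HasCompactSupport σ) (hσc' : HasCompactSupport σ') :
    ∫ z, σ z ∂μ = ∫ z, σ' z ∂μ := by
  obtain ⟨h, hh⟩ := exists_hasFDerivAt_sub_of_eq_exterior_derivative hl hl' hd
  have hσ_sub (z : E) : HasFDerivAt (σ - σ')
      ((l (f z) - l' (f z)).comp (fderiv ℝ f z) - (l z - l' z)) z := by
    rw [ContinuousLinearMap.sub_comp, sub_sub_sub_comm]
    exact (hσ z).sub (hσ' z)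
  have hσ_cont : Continuous σ := continuous_iff_continuousAt.2 fun z => (hσ z).continuousAt
  have hσ_cont' : Continuous σ' := continuous_iff_continuousAt.2 fun z => (hσ' z).continuousAt
  rw [← sub_eq_zero, ← integral_sub (hσ_cont.integrable_of_hasCompactSupport hσc)
    (hσ_cont'.integrable_of_hasCompactSupport hσc')]
  exact integral_eq_zero_of_hasFDerivAt_comp_sub hf hfμ hf_compact hh hσ_sub (hσc.sub hσc')

end Action

lemma det_eq_omega0 (A : (ℝ × ℝ) →L[ℝ] (ℝ × ℝ)) : A.det = omega0 (A (1, 0)) (A (0, 1)) := by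
  rw [ContinuousLinearMap.det, ← LinearMap.det_toMatrix (Module.Basis.finTwoProd ℝ),
    Matrix.det_fin_two]
  simp only [LinearMap.toMatrix_apply, Module.Basis.finTwoProd_zero, Module.Basis.finTwoProd_one,
    Module.Basis.coe_finTwoProd_repr, ContinuousLinearMap.coe_coe, Matrix.cons_val_zero,
    Matrix.cons_val_one, Matrix.cons_val_fin_one, omega0]
  ring

namespace DiffC

lemma differentiable (φ : DiffC) : Differentiable ℝ φ.toFun :=
  φ.smooth.differentiable (by simp)

lemma bijective (φ : DiffC) : Function.Bijective φ.toFun :=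
  ⟨φ.left_inv.injective, φ.right_inv.surjective⟩

lemma det_fderiv (φ : DiffC) (z : ℝ × ℝ) : (fderiv ℝ φ.toFun z).det = 1 := by
  rw [det_eq_omega0, φ.area]
  simp [omega0]

lemma measurePreserving (φ : DiffC) : MeasurePreserving φ.toFun :=
  measurePreserving_of_abs_det_eq_one volume (fun z => (φ.differentiable z).hasFDerivAt)
    φ.bijective fun z => by rw [φ.det_fderiv, abs_one]

end DiffC

lemma IsPrimitive.differentiable {l : OneForm} (hl : IsPrimitive l) : Differentiable ℝ l :=
  hl.1.differentiable (by simp)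

lemma IsAction.hasFDerivAt {f : ℝ × ℝ → ℝ × ℝ} {l : OneForm} {σ : ℝ × ℝ → ℝ}
    (hσ : IsAction f l σ) (z : ℝ × ℝ) :
    HasFDerivAt σ ((l (f z)).comp (fderiv ℝ f z) - l z) z :=
  (hσ.1.differentiable (by simp) z).hasFDerivAt.congr_fderiv (hσ.2.2 z)

/-- The integral of the action does not depend on the choice of the primitive of `ω₀`;
hence the Calabi invariant `CAL(φ) = ∫_{ℝ²} σ_{φ,λ}` is well defined. -/
theorem statement7 (φ : DiffC) (l l' : OneForm)
    (hl : IsPrimitive l) (hl' : IsPrimitive l')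
    (σ σ' : ℝ × ℝ → ℝ)
    (hσ : IsAction φ.toFun l σ) (hσ' : IsAction φ.toFun l' σ') :
    ∫ z : ℝ × ℝ, σ z = ∫ z : ℝ × ℝ, σ' z :=
  statement7_general φ.differentiable φ.measurePreserving φ.compact hl.differentiable
    hl'.differentiable (fun z u v => (hl.2 z u v).trans (hl'.2 z u v).symm) hσ.hasFDerivAt
    hσ'.hasFDerivAt hσ.2.1 hσ'.2.1
end
end

section
/- Let δ ∈ (0,1/2) and let χ : [0,∞) → ℝ be a smooth convex function which is supported in [0,1) and satisfies χ(s) = 1 − δ − s for all s ∈ [0,1−2δ]. Then for every s ∈ [0,∞) one has 0 ≤ χ(s) − s·χ'(s) ≤ 1 − δ, with equality χ(s) − s·χ'(s) = 1 − δ for all s ∈ [0,1−2δ]; moreover, for every s ∈ [0,∞) one has −(1−δ)·χ'(s) ≤ χ(s) − s·χ'(s) ≤ −χ'(s). -/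
noncomputable section

/-!
The number `χ(s) - s χ'(s)` is the height at `0` of the tangent line to `χ` at `s`, and by convexity
this line lies below the graph. Reading that at `0` and at `1` gives the two upper bounds. A convex
function which is eventually zero is nonnegative and nonincreasing, hence the nonnegativity. The
remaining bound says that the tangent at `s` is still nonnegative at `1 - δ`, the zero of the
tangent at `0`: up to that zero the graph lies above the tangent at `0`, whose slope is the smaller
one, and beyond it `χ' ≤ 0 ≤ χ` suffices.
-/

open Set

theorem deriv_eq_of_eqOn {𝕜 F : Type*} [NontriviallyNormedField 𝕜] [NormedAddCommGroup F]
    [NormedSpace 𝕜 F] {f g : 𝕜 → F} {s : Set 𝕜} {x : 𝕜} (hs : UniqueDiffWithinAt 𝕜 s x)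
    (hf : DifferentiableAt 𝕜 f x) (hg : DifferentiableAt 𝕜 g x) (hfg : EqOn f g s) (hx : x ∈ s) :
    deriv f x = deriv g x := by
  rw [← hf.derivWithin hs, derivWithin_congr hfg (hfg hx), hg.derivWithin hs]

section ConvexOn

variable {f : ℝ → ℝ} {S : Set ℝ} {a b c x y : ℝ}

theorem tangent_le_of_convexOn (hf : ConvexOn ℝ S f) (hx : x ∈ S) (hy : y ∈ S)
    (hfx : DifferentiableAt ℝ f x) : f x + deriv f x * (y - x) ≤ f y := by
  rcases lt_trichotomy x y with hxy | rfl | hyx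
  · have hslope := hf.deriv_le_slope hx hy hxy hfx
    rw [slope_def_field, le_div_iff₀ (sub_pos.2 hxy)] at hslope
    linarith
  · simp
  · have hslope := hf.slope_le_deriv hy hx hyx hfx
    rw [slope_def_field, div_le_iff₀ (sub_pos.2 hyx)] at hslope
    linarith

theorem le_of_convexOn_of_eqOn_const (hf : ConvexOn ℝ (Ici a) f)
    (hconst : EqOn f (fun _ ↦ c) (Ici b)) (hx : x ∈ Ici a) : c ≤ f x := by
  obtain ⟨y, hay, hby⟩ : ∃ y, a < y ∧ b < y := by simpa using exists_gt (max a b)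
  have hlocal : f =ᶠ[nhds y] fun _ ↦ c := hconst.eventuallyEq_of_mem (Ici_mem_nhds hby)
  have hmin : IsLocalMin f y := hlocal.isLocalMin_iff.2 isLocalMin_const
  have hyx : f y ≤ f x := IsMinOn.of_isLocalMinOn_of_convexOn hay.le (hmin.on _) hf hx
  rwa [hlocal.eq_of_nhds] at hyx

theorem deriv_nonpos_of_convexOn_of_eqOn_const (hf : ConvexOn ℝ (Ici a) f)
    (hconst : EqOn f (fun _ ↦ c) (Ici b)) (hx : x ∈ Ici a) (hfx : DifferentiableAt ℝ f x) :
    deriv f x ≤ 0 := by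
  obtain ⟨y, hxy, hby⟩ : ∃ y, x < y ∧ b < y := by simpa using exists_gt (max x b)
  have htangent : f x + deriv f x * (y - x) ≤ f y :=
    tangent_le_of_convexOn hf hx (mem_Ici.2 (hx.out.trans hxy.le)) hfx
  have hfy : f y ≤ f x :=
    (hconst hby.le).trans_le (le_of_convexOn_of_eqOn_const hf hconst hx)
  exact nonpos_of_mul_nonpos_left (by linarith) (sub_pos.2 hxy)

-- When `deriv f a < 0`, this says that the tangent at `x` is nonnegative at the zero
-- `a - f a / deriv f a` of the tangent at `a`, with the denominator cleared.
theorem deriv_mul_tangent_le_of_convexOn (hf : ConvexOn ℝ S f) (ha : a ∈ S) (hx : x ∈ S)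
    (hax : a ≤ x) (hfa : DifferentiableAt ℝ f a) (hfx : DifferentiableAt ℝ f x)
    (hx_nonneg : 0 ≤ f x) (hx_deriv : deriv f x ≤ 0) :
    deriv f a * (f x + deriv f x * (a - x)) ≤ f a * deriv f x := by
  have hderiv : deriv f a ≤ deriv f x := by
    rcases hax.eq_or_lt with rfl | hlt
    · rfl
    · exact (hf.deriv_le_slope ha hx hlt hfa).trans (hf.slope_le_deriv ha hx hlt hfx)
  have ha_deriv : deriv f a ≤ 0 := hderiv.trans hx_deriv
  suffices deriv f a * f x ≤ (f a + deriv f a * (x - a)) * deriv f x by linarith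
  rcases le_total 0 (f a + deriv f a * (x - a)) with hpos | hneg
  · calc deriv f a * f x ≤ deriv f a * (f a + deriv f a * (x - a)) :=
          mul_le_mul_of_nonpos_left (tangent_le_of_convexOn hf ha hx hfa) ha_deriv
      _ ≤ deriv f x * (f a + deriv f a * (x - a)) := mul_le_mul_of_nonneg_right hderiv hpos
      _ = (f a + deriv f a * (x - a)) * deriv f x := mul_comm _ _
  · exact (mul_nonpos_of_nonpos_of_nonneg ha_deriv hx_nonneg).trans
      (mul_nonneg_of_nonpos_of_nonpos hneg hx_deriv)

end ConvexOn

theorem statement17_general (δ : ℝ) (hδ : δ < 1 / 2) (χ : ℝ → ℝ)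
    (hdiff : ∀ s, 0 ≤ s → DifferentiableAt ℝ χ s)
    (hconv : ConvexOn ℝ (Ici (0 : ℝ)) χ)
    (hsupp : ∀ s, 1 ≤ s → χ s = 0)
    (hlin : ∀ s ∈ Icc (0 : ℝ) (1 - 2 * δ), χ s = 1 - δ - s) :
    (∀ s, 0 ≤ s → 0 ≤ χ s - s * deriv χ s ∧ χ s - s * deriv χ s ≤ 1 - δ) ∧
    (∀ s ∈ Icc (0 : ℝ) (1 - 2 * δ), χ s - s * deriv χ s = 1 - δ) ∧
    (∀ s, 0 ≤ s →
      -(1 - δ) * deriv χ s ≤ χ s - s * deriv χ s ∧ χ s - s * deriv χ s ≤ -deriv χ s) := by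
  have hslope : ∀ s ∈ Icc (0 : ℝ) (1 - 2 * δ), deriv χ s = -1 := fun s hs ↦ by
    rw [deriv_eq_of_eqOn (uniqueDiffOn_Icc (by linarith) s hs) (hdiff s hs.1) (by fun_prop) hlin hs]
    simp
  have h0 : (0 : ℝ) ∈ Icc 0 (1 - 2 * δ) := ⟨le_rfl, by linarith⟩
  have hχ0 : χ 0 = 1 - δ := by simpa using hlin 0 h0
  have hnonneg : ∀ s, 0 ≤ s → 0 ≤ χ s := fun s ↦ le_of_convexOn_of_eqOn_const hconv hsupp
  have hderiv : ∀ s, 0 ≤ s → deriv χ s ≤ 0 := fun s hs ↦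
    deriv_nonpos_of_convexOn_of_eqOn_const hconv hsupp hs (hdiff s hs)
  have htangent : ∀ s t, 0 ≤ s → 0 ≤ t → χ s + deriv χ s * (t - s) ≤ χ t := fun s t hs ht ↦
    tangent_le_of_convexOn hconv hs ht (hdiff s hs)
  refine ⟨fun s hs ↦ ⟨?_, ?_⟩, fun s hs ↦ ?_, fun s hs ↦ ⟨?_, ?_⟩⟩
  · linarith [hnonneg s hs, mul_nonpos_of_nonneg_of_nonpos hs (hderiv s hs)]
  · linarith [htangent s 0 hs le_rfl]
  · linear_combination hlin s hs - s * hslope s hs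
  · have h := deriv_mul_tangent_le_of_convexOn hconv self_mem_Ici hs hs (hdiff 0 le_rfl)
      (hdiff s hs) (hnonneg s hs) (hderiv s hs)
    rw [hslope 0 h0, hχ0] at h
    linarith
  · linarith [htangent s 1 hs zero_le_one, hsupp 1 le_rfl]

/-- Further properties of the cut-off functions `χ_δ`: if `χ : [0,∞) → ℝ` is smooth,
convex, supported in `[0,1)` and equal to `1 − δ − s` on `[0,1−2δ]`, then
`0 ≤ χ(s) − sχ'(s) ≤ 1 − δ` for all `s ≥ 0`, with equality `χ(s) − sχ'(s) = 1 − δ` on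
`[0,1−2δ]`, and moreover `−(1−δ)χ'(s) ≤ χ(s) − sχ'(s) ≤ −χ'(s)` for all `s ≥ 0`. -/
theorem statement17 (δ : ℝ) (hδ : δ ∈ Set.Ioo (0 : ℝ) (1 / 2))
    (χ : ℝ → ℝ) (hsm : ContDiff ℝ (⊤ : ℕ∞) χ)
    (hconv : ConvexOn ℝ (Set.Ici (0 : ℝ)) χ)
    (hsupp : ∃ η > (0 : ℝ), ∀ s, 1 - η ≤ s → χ s = 0)
    (hlin : ∀ s ∈ Set.Icc (0 : ℝ) (1 - 2 * δ), χ s = 1 - δ - s) :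
    (∀ s, 0 ≤ s → 0 ≤ χ s - s * deriv χ s ∧ χ s - s * deriv χ s ≤ 1 - δ) ∧
    (∀ s ∈ Set.Icc (0 : ℝ) (1 - 2 * δ), χ s - s * deriv χ s = 1 - δ) ∧
    (∀ s, 0 ≤ s →
      -(1 - δ) * deriv χ s ≤ χ s - s * deriv χ s ∧ χ s - s * deriv χ s ≤ -deriv χ s) := by
  obtain ⟨η, hη, hzero⟩ := hsupp
  exact statement17_general δ hδ.2 χ (fun s _ ↦ hsm.differentiable (by simp) s) hconv
    (fun s hs ↦ hzero s (by linarith)) hlin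
end
end

section
/- For each natural number n ≥ 2 and each real ε > 0 there exist a smooth 1-form λ on ℝ² with dλ = ω₀ such that λ − λ₀ is supported in a compact subset of the open unit disk, and a map φ ∈ Diff_c(𝔻,ω₀), with the following properties: (i) the action satisfies −π + π/n < σ_{φ,λ}(z) < π/n for all z ∈ ℝ², and σ_{φ,λ}(z₀) ≥ 0 for every fixed point z₀ of φ; (ii) the Calabi invariant satisfies −π²(1 − 1/n) < CAL(φ) < −π²(1 − 1/n) + ε; (iii) the action is invariant under φ, i.e. σ_{φ,λ}∘φ = σ_{φ,λ}; (iv) if z₀ is a fixed point of φ^k for some positive integer k but z₀ is not a fixed point of φ, then k ≥ n. -/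
open MeasureTheory

noncomputable section

/-- The standard rotationally invariant primitive `λ₀ = (1/2)(x dy − y dx)` of `ω₀`. -/
def lambda0 : OneForm := fun z =>
  (z.1 / 2) • ContinuousLinearMap.snd ℝ ℝ ℝ - (z.2 / 2) • ContinuousLinearMap.fst ℝ ℝ ℝ

/-- The open unit disk in `ℝ²`. -/
def openDisk : Set (ℝ × ℝ) := {z : ℝ × ℝ | z.1 ^ 2 + z.2 ^ 2 < 1}

/-!
Rotate the disk by `2 * π / n` near the origin, cutting the rotation off close to the boundary, and
compose with strong negative twists in finitely many small discs which fill almost the whole area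
and are permuted freely by the rotation. The rotation contributes almost `π / n` to the action and
the twists bring it down to almost `-π + π / n` on the small discs, so the Calabi invariant is close
to `-π² * (1 - 1 / n)`. No small disc contains a fixed point, as it returns to itself only after `n`
steps, and outside the small discs the map is the truncated rotation, whose action is nonnegative
and whose angles lie in `[0, 2 * π / n]`.

For `λ₀` the action of a twist in a disc centred away from the origin is not a function of the
distance to its centre. Adding to `λ₀` the differential of a truncated linear function on each small
disc makes it invariant under the rotations about that centre; the resulting sum is invariant under
the rotation by `2 * π / n`, so both factors have actions which are constant along the map, and the
actions add up.
-/

open scoped ContDiff ComplexConjugate Pointwise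

section Action

namespace DiffC

instance : Monoid DiffC where
  mul f g :=
    { toFun := f.toFun ∘ g.toFun
      invFun := g.invFun ∘ f.invFun
      smooth := f.smooth.comp g.smooth
      smooth_inv := g.smooth_inv.comp f.smooth_inv
      left_inv := f.left_inv.comp g.left_inv
      right_inv := f.right_inv.comp g.right_inv
      area := fun z u v => by
        rw [fderiv_comp _ (f.smooth.differentiable (by simp) _)
          (g.smooth.differentiable (by simp) _)]
        simp only [ContinuousLinearMap.comp_apply, f.area, g.area]
      compact := by
        obtain ⟨K, hK, hf⟩ := f.compact
        obtain ⟨L, hL, hg⟩ := g.compact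
        refine ⟨K ∪ L, hK.union hL, fun z hz => ?_⟩
        rw [Set.mem_union, not_or] at hz
        rw [Function.comp_apply, hg z hz.2, hf z hz.1] }
  one :=
    { toFun := id
      invFun := id
      smooth := contDiff_id
      smooth_inv := contDiff_id
      left_inv := fun _ => rfl
      right_inv := fun _ => rfl
      area := fun z u v => by simp
      compact := ⟨∅, isCompact_empty, fun _ _ => rfl⟩ }
  mul_assoc _ _ _ := rfl
  one_mul _ := rfl
  mul_one _ := rfl

lemma mul_toFun (f g : DiffC) : (f * g).toFun = f.toFun ∘ g.toFun := rfl

lemma one_toFun : (1 : DiffC).toFun = id := rfl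

lemma hasCompactSupport_comp (f : DiffC) {σ : ℝ × ℝ → ℝ} (hσ : HasCompactSupport σ) :
    HasCompactSupport (σ ∘ f.toFun) :=
  hσ.comp_homeomorph
    { toFun := f.toFun
      invFun := f.invFun
      left_inv := f.left_inv
      right_inv := f.right_inv
      continuous_toFun := f.smooth.continuous
      continuous_invFun := f.smooth_inv.continuous }

lemma list_prod_toFun_eq_self {L : List DiffC} {z : ℝ × ℝ} (h : ∀ f ∈ L, f.toFun z = z) :
    L.prod.toFun z = z := by
  induction L with
  | nil => rfl
  | cons f L ih =>
    rw [List.forall_mem_cons] at h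
    rw [List.prod_cons, mul_toFun, Function.comp_apply, ih h.2, h.1]

lemma comp_list_prod_toFun {α : Type*} {F : ℝ × ℝ → α} {L : List DiffC}
    (h : ∀ f ∈ L, F ∘ f.toFun = F) : F ∘ L.prod.toFun = F := by
  induction L with
  | nil => rfl
  | cons f L ih =>
    rw [List.forall_mem_cons] at h
    rw [List.prod_cons, mul_toFun, ← Function.comp_assoc, h.1, ih h.2]

end DiffC

namespace IsAction

variable {l : OneForm} {f g : DiffC} {σ τ U : ℝ × ℝ → ℝ}

lemma one (l : OneForm) : IsAction (1 : DiffC).toFun l 0 :=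
  ⟨contDiff_const, HasCompactSupport.zero, fun z => by simp [pullbackForm, DiffC.one_toFun]⟩

lemma mul (hσ : IsAction f.toFun l σ) (hτ : IsAction g.toFun l τ) :
    IsAction (f * g).toFun l (σ ∘ g.toFun + τ) := by
  refine ⟨(hσ.1.comp g.smooth).add hτ.1, (g.hasCompactSupport_comp hσ.2.1).add hτ.2.1, fun z => ?_⟩
  have dσ := hσ.1.differentiable (by simp) (g.toFun z)
  have dτ := hτ.1.differentiable (by simp) z
  have dg := g.smooth.differentiable (by simp) z
  have df := f.smooth.differentiable (by simp) (g.toFun z)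
  rw [fderiv_add (dσ.comp z dg) dτ, fderiv_comp z dσ dg, hσ.2.2, hτ.2.2]
  simp only [pullbackForm, DiffC.mul_toFun, fderiv_comp z df dg]
  ext <;> simp

lemma list_prod {ι : Type*} {L : List ι} {f : ι → DiffC} {τ : ι → ℝ × ℝ → ℝ}
    (h : ∀ i ∈ L, IsAction (f i).toFun l (τ i))
    (hinv : ∀ i ∈ L, ∀ j ∈ L, τ i ∘ (f j).toFun = τ i) :
    IsAction (L.map f).prod.toFun l (L.map τ).sum := by
  induction L with
  | nil => exact one l
  | cons i L ih =>
    simp only [List.forall_mem_cons] at h hinv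
    have hcomp : τ i ∘ (L.map f).prod.toFun = τ i :=
      DiffC.comp_list_prod_toFun (List.forall_mem_map.2 hinv.1.2)
    have hmul := mul h.1 (ih h.2 fun j hj => (hinv.2 j hj).2)
    rwa [hcomp] at hmul

lemma add_fderiv (hσ : IsAction f.toFun l σ) (hU : ContDiff ℝ ∞ U) (hUc : HasCompactSupport U) :
    IsAction f.toFun (l + fderiv ℝ U) (σ + (U ∘ f.toFun - U)) := by
  refine ⟨hσ.1.add ((hU.comp f.smooth).sub hU),
    hσ.2.1.add ((f.hasCompactSupport_comp hUc).sub hUc), fun z => ?_⟩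
  have dσ := hσ.1.differentiable (by simp) z
  have dU := hU.differentiable (by simp)
  have df := f.smooth.differentiable (by simp) z
  rw [fderiv_add dσ (((dU _).comp z df).sub (dU z)), fderiv_sub ((dU _).comp z df) (dU z),
    fderiv_comp z (dU _) df, hσ.2.2]
  simp only [pullbackForm, Pi.add_apply, ContinuousLinearMap.add_comp]
  abel

end IsAction

end Action

section Primitive

lemma isPrimitive_lambda0 : IsPrimitive lambda0 := by
  let L : (ℝ × ℝ) →L[ℝ] (ℝ × ℝ) →L[ℝ] ℝ := (1 / 2 : ℝ) •
    ((ContinuousLinearMap.fst ℝ ℝ ℝ).smulRight (ContinuousLinearMap.snd ℝ ℝ ℝ) -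
      (ContinuousLinearMap.snd ℝ ℝ ℝ).smulRight (ContinuousLinearMap.fst ℝ ℝ ℝ))
  have hL : lambda0 = L := by
    funext z
    ext <;> simp [lambda0, L] <;> ring
  rw [hL]
  refine ⟨L.contDiff, fun z u v => ?_⟩
  rw [L.fderiv]
  simp only [one_div, smul_apply, sub_apply, ContinuousLinearMap.smulRight_apply,
    ContinuousLinearMap.coe_fst', ContinuousLinearMap.coe_snd', smul_eq_mul, omega0, L]
  ring

lemma IsPrimitive.add_fderiv {l : OneForm} {U : ℝ × ℝ → ℝ} (hl : IsPrimitive l)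
    (hU : ContDiff ℝ ∞ U) : IsPrimitive (l + fderiv ℝ U) := by
  have hdU : ContDiff ℝ ∞ (fderiv ℝ U) := hU.fderiv_right (by simp)
  refine ⟨hl.1.add hdU, fun z u v => ?_⟩
  have hsymm : fderiv ℝ (fderiv ℝ U) z u v = fderiv ℝ (fderiv ℝ U) z v u :=
    ((contDiff_infty.1 hU 2).contDiffAt.isSymmSndFDerivAt (by simp)).eq u v
  rw [fderiv_add (hl.1.differentiable (by simp) z) (hdU.differentiable (by simp) z), ← hl.2 z u v]
  simp only [add_apply, hsymm]
  ring

end Primitive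

section ComplexCoordinate

/-- The identification `(x, y) ↦ x + i y` of `ℝ²` with `ℂ`. -/
def toComplex : (ℝ × ℝ) ≃L[ℝ] ℂ := Complex.equivRealProdCLM.symm

lemma toComplex_re (z : ℝ × ℝ) : (toComplex z).re = z.1 := by simp [toComplex]

lemma toComplex_im (z : ℝ × ℝ) : (toComplex z).im = z.2 := by simp [toComplex]

lemma norm_toComplex_sq (z : ℝ × ℝ) : ‖toComplex z‖ ^ 2 = z.1 ^ 2 + z.2 ^ 2 := by
  rw [Complex.sq_norm, Complex.normSq_apply, toComplex_re, toComplex_im]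
  ring

lemma omega0_eq_im (u v : ℝ × ℝ) : omega0 u v = (conj (toComplex u) * toComplex v).im := by
  simp only [omega0, Complex.mul_im, Complex.conj_re, toComplex_re, toComplex_im, Complex.conj_im]
  ring

lemma lambda0_eq_im (z u : ℝ × ℝ) :
    lambda0 z u = (conj (toComplex z) * toComplex u).im / 2 := by
  simp only [lambda0, sub_apply, smul_apply, ContinuousLinearMap.coe_snd', smul_eq_mul,
    ContinuousLinearMap.coe_fst', Complex.mul_im, Complex.conj_re, toComplex_re, toComplex_im,
    Complex.conj_im]
  ring

lemma conj_circle_mul_mul_circle_mul (ζ : Circle) (u v : ℂ) :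
    conj (ζ * u) * (ζ * v) = conj u * v := by
  rw [map_mul, mul_mul_mul_comm, ← Circle.coe_inv_eq_conj, ← Circle.coe_mul, inv_mul_cancel,
    Circle.coe_one, one_mul]

lemma im_conj_mul_add_I_mul (u v w : ℂ) (α β : ℝ) :
    (conj (u + α * Complex.I * w) * (v + β * Complex.I * w)).im =
      (conj u * v).im + β * (conj w * u).re - α * (conj w * v).re := by
  simp only [map_add, map_mul, Complex.conj_ofReal, Complex.conj_I, Complex.mul_im, Complex.mul_re,
    Complex.add_re, Complex.add_im, Complex.neg_re, Complex.neg_im, Complex.conj_re,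
    Complex.conj_im, Complex.ofReal_re, Complex.ofReal_im, Complex.I_re, Complex.I_im]
  ring

end ComplexCoordinate

/-- A round disc in the plane, given by its centre and its radius. -/
@[ext]
structure Disc where
  center : ℂ
  radius : ℝ
  radius_pos : 0 < radius

namespace Disc

section Geometry

instance : MulAction Circle Disc where
  smul ζ p := ⟨ζ * p.center, p.radius, p.radius_pos⟩
  one_smul p := Disc.ext (one_mul p.center) rfl
  mul_smul ζ ξ p := Disc.ext (mul_assoc (ζ : ℂ) ξ p.center) rfl

lemma smul_center (ζ : Circle) (p : Disc) : (ζ • p).center = ζ * p.center := rfl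

lemma smul_radius (ζ : Circle) (p : Disc) : (ζ • p).radius = p.radius := rfl

/-- The unit disc centred at the origin. -/
def unit : Disc := ⟨0, 1, one_pos⟩

lemma unit_radius : unit.radius = 1 := rfl

/-- The squared distance to the centre in units of the squared radius, so that the closed disc
is `{z | p.relSqDist z ≤ 1}`. -/
def relSqDist (p : Disc) (z : ℝ × ℝ) : ℝ := ‖toComplex z - p.center‖ ^ 2 / p.radius ^ 2

/-- The rotation of the plane about the centre of the disc by the angle of `ζ`. -/
def rotate (p : Disc) (ζ : Circle) (z : ℝ × ℝ) : ℝ × ℝ :=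
  toComplex.symm (p.center + ζ * (toComplex z - p.center))

/-- The linear function `v` such that `λ₀ + dv` is the primitive of `ω₀` invariant under the
rotations about the centre of the disc. -/
def potential (p : Disc) (z : ℝ × ℝ) : ℝ := -(conj p.center * toComplex z).im / 2

variable (p : Disc) (ζ ξ : Circle) (z : ℝ × ℝ)

lemma radius_sq_pos : 0 < p.radius ^ 2 := pow_pos p.radius_pos 2

lemma radius_sq_mul_relSqDist :
    p.radius ^ 2 * p.relSqDist z = ‖toComplex z - p.center‖ ^ 2 :=
  mul_div_cancel₀ _ p.radius_sq_pos.ne'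

lemma relSqDist_unit : unit.relSqDist z = ‖toComplex z‖ ^ 2 := by
  simp [relSqDist, unit]

lemma relSqDist_le_one_iff :
    p.relSqDist z ≤ 1 ↔ toComplex z ∈ Metric.closedBall p.center p.radius := by
  rw [relSqDist, div_le_one p.radius_sq_pos, sq_le_sq₀ (norm_nonneg _) p.radius_pos.le,
    mem_closedBall_iff_norm]

lemma unit_potential : unit.potential z = 0 := by
  simp [potential, unit]

lemma toComplex_rotate :
    toComplex (p.rotate ζ z) = p.center + ζ * (toComplex z - p.center) :=
  toComplex.apply_symm_apply _

lemma rotate_one : p.rotate 1 z = z := by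
  simp [rotate]

lemma rotate_rotate : p.rotate ζ (p.rotate ξ z) = p.rotate (ζ * ξ) z := by
  simp only [rotate, ContinuousLinearEquiv.apply_symm_apply, add_sub_cancel_left, Circle.coe_mul,
    mul_assoc]

lemma rotate_eq_self_iff : p.rotate ζ z = z ↔ ζ = 1 ∨ toComplex z = p.center := by
  rw [← toComplex.injective.eq_iff, toComplex_rotate, ← eq_sub_iff_add_eq', mul_left_eq_self₀,
    sub_eq_zero, Circle.coe_eq_one]

lemma relSqDist_rotate : p.relSqDist (p.rotate ζ z) = p.relSqDist z := by
  rw [relSqDist, toComplex_rotate, add_sub_cancel_left, norm_mul, Circle.norm_coe, one_mul,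
    relSqDist]

lemma toComplex_unit_rotate : toComplex (unit.rotate ζ z) = ζ * toComplex z := by
  simp [toComplex_rotate, unit]

lemma relSqDist_smul_rotate : (ζ • p).relSqDist (unit.rotate ζ z) = p.relSqDist z := by
  rw [relSqDist, toComplex_unit_rotate, smul_center, smul_radius, ← mul_sub, norm_mul,
    Circle.norm_coe, one_mul, relSqDist]

lemma potential_smul_rotate : (ζ • p).potential (unit.rotate ζ z) = p.potential z := by
  rw [potential, toComplex_unit_rotate, smul_center,
    conj_circle_mul_mul_circle_mul, potential]

lemma contDiff_relSqDist : ContDiff ℝ ∞ p.relSqDist :=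
  ((contDiff_norm_sq ℝ).comp (toComplex.contDiff.sub contDiff_const)).div_const _

lemma contDiff_potential : ContDiff ℝ ∞ p.potential :=
  ((Complex.imCLM.contDiff.comp (contDiff_const.mul toComplex.contDiff)).neg).div_const 2

lemma isCompact_setOf_relSqDist_le (b : ℝ) : IsCompact {z | p.relSqDist z ≤ b} := by
  have hball : IsCompact (toComplex ⁻¹' Metric.closedBall p.center √(p.radius ^ 2 * b)) :=
    toComplex.toHomeomorph.isCompact_preimage.2 (isCompact_closedBall _ _)
  refine hball.of_isClosed_subset
    (isClosed_le p.contDiff_relSqDist.continuous continuous_const) fun z hz => ?_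
  rw [Set.mem_preimage, mem_closedBall_iff_norm]
  refine Real.le_sqrt_of_sq_le ?_
  rw [← radius_sq_mul_relSqDist]
  exact mul_le_mul_of_nonneg_left hz p.radius_sq_pos.le

lemma setOf_relSqDist_unit_le_subset_openDisk {b : ℝ} (hb : b < 1) :
    {z | unit.relSqDist z ≤ b} ⊆ openDisk := fun z hz => by
  rw [openDisk, Set.mem_ofPred_eq, ← norm_toComplex_sq, ← relSqDist_unit]
  exact lt_of_le_of_lt hz hb

end Geometry

section Twist

/-- The twist rotating the circle `{p.relSqDist = s}` about the centre of the disc by the angle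
`g s / p.radius ^ 2`. With this normalisation the action of the twist depends on `g` alone. -/
def twist (p : Disc) (g : ℝ → ℝ) (z : ℝ × ℝ) : ℝ × ℝ :=
  p.rotate (Circle.exp (g (p.relSqDist z) / p.radius ^ 2)) z

variable (p : Disc) {g S : ℝ → ℝ} {b : ℝ} (z : ℝ × ℝ)

lemma relSqDist_twist : p.relSqDist (p.twist g z) = p.relSqDist z :=
  p.relSqDist_rotate _ z

lemma twist_neg_twist : p.twist (-g) (p.twist g z) = z := by
  rw [twist, relSqDist_twist, twist, rotate_rotate, ← Circle.exp_add, Pi.neg_apply, neg_div,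
    neg_add_cancel, Circle.exp_zero, rotate_one]

lemma twist_eq_self (h : g (p.relSqDist z) = 0) : p.twist g z = z := by
  rw [twist, h, zero_div, Circle.exp_zero, rotate_one]

lemma twist_iterate (k : ℕ) :
    (p.twist g)^[k] z = p.rotate (Circle.exp (k * (g (p.relSqDist z) / p.radius ^ 2))) z := by
  induction k with
  | zero => simp [rotate_one]
  | succ k ih =>
    rw [Function.iterate_succ_apply', ih, twist, relSqDist_rotate, rotate_rotate, ← Circle.exp_add]
    push_cast
    ring_nf

lemma twist_eq_self_of_iterate {k : ℕ} (hk : 0 < k) (hg : 0 ≤ g (p.relSqDist z) / p.radius ^ 2)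
    (hkg : k * (g (p.relSqDist z) / p.radius ^ 2) < 2 * Real.pi)
    (hz : (p.twist g)^[k] z = z) : p.twist g z = z := by
  set θ := g (p.relSqDist z) / p.radius ^ 2 with hθ
  rw [twist_iterate, rotate_eq_self_iff] at hz
  rw [twist, rotate_eq_self_iff]
  refine hz.imp_left fun hexp => ?_
  have hkθ : k * θ = 0 := Circle.exp_injOn_Ico (by rw [sub_zero])
    ⟨mul_nonneg k.cast_nonneg hg, hkg⟩ ⟨le_rfl, Real.two_pi_pos⟩ (hexp.trans Circle.exp_zero.symm)
  rw [← hθ, (mul_eq_zero_iff_left (Nat.cast_ne_zero.2 hk.ne')).1 hkθ, Circle.exp_zero]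

lemma contDiff_twist (hg : ContDiff ℝ ∞ g) : ContDiff ℝ ∞ (p.twist g) := by
  have hangle : ContDiff ℝ ∞ fun z => ((g (p.relSqDist z) / p.radius ^ 2 : ℝ) : ℂ) :=
    Complex.ofRealCLM.contDiff.comp ((hg.comp p.contDiff_relSqDist).div_const _)
  exact toComplex.symm.contDiff.comp (contDiff_const.add
    ((hangle.mul contDiff_const).cexp.mul (toComplex.contDiff.sub contDiff_const)))

lemma toComplex_fderiv_twist (hg : ContDiff ℝ ∞ g) (u : ℝ × ℝ) :
    toComplex (fderiv ℝ (p.twist g) z u) =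
      Circle.exp (g (p.relSqDist z) / p.radius ^ 2) * (toComplex u +
        ((deriv g (p.relSqDist z) * fderiv ℝ p.relSqDist z u / p.radius ^ 2 : ℝ) : ℂ) *
          Complex.I * (toComplex z - p.center)) := by
  have hρ := (p.contDiff_relSqDist.differentiable (by simp) z).hasFDerivAt
  have hgρ := (hg.differentiable (by simp) (p.relSqDist z)).hasDerivAt.comp_hasFDerivAt z hρ
  have hangle := Complex.ofRealCLM.hasFDerivAt.comp z (hgρ.mul_const (p.radius ^ 2)⁻¹)
  have hw := toComplex.hasFDerivAt (x := z) |>.sub_const p.center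
  have htwist := ((hangle.mul_const Complex.I).cexp.mul hw).const_add p.center
  have hcomp : HasFDerivAt (fun z => toComplex (p.twist g z)) _ z :=
    htwist.congr_of_eventuallyEq (Filter.Eventually.of_forall fun z => by
      simp [twist, toComplex_rotate, div_eq_mul_inv])
  have hdiff := ((p.contDiff_twist hg).differentiable (by simp) z).hasFDerivAt
  have huniq := (toComplex.hasFDerivAt.comp z hdiff).unique hcomp
  refine (DFunLike.congr_fun huniq u).trans ?_
  simp only [Function.comp_apply, Complex.ofRealCLM_apply, Complex.ofReal_mul, Complex.ofReal_inv,
    Complex.ofReal_pow, ContinuousLinearMap.comp_smulₛₗ, map_inv₀, Real.ringHom_apply, add_apply,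
    smul_apply, ContinuousLinearEquiv.coe_coe, smul_eq_mul, ContinuousLinearMap.comp_apply,
    Complex.real_smul, div_eq_mul_inv, Circle.coe_exp]
  ring

lemma fderiv_relSqDist (u : ℝ × ℝ) :
    fderiv ℝ p.relSqDist z u =
      2 * (conj (toComplex z - p.center) * toComplex u).re / p.radius ^ 2 := by
  have hsq := ((toComplex.hasFDerivAt (x := z)).sub_const p.center).norm_sq
  have hρ : HasFDerivAt p.relSqDist _ z := hsq.mul_const (p.radius ^ 2)⁻¹
  rw [hρ.fderiv]
  simp only [map_sub, ContinuousLinearMap.sub_comp, smul_apply, sub_apply,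
    ContinuousLinearMap.comp_apply, ContinuousLinearEquiv.coe_coe, coe_innerSL_apply, Complex.inner,
    Complex.mul_re, Complex.conj_re, Complex.conj_im, nsmul_eq_mul, Nat.cast_ofNat, smul_eq_mul,
    Complex.sub_re, Complex.sub_im]
  ring

lemma fderiv_potential (u : ℝ × ℝ) :
    fderiv ℝ p.potential z u = -(conj p.center * toComplex u).im / 2 := by
  have hv : HasFDerivAt p.potential _ z :=
    (Complex.imCLM.hasFDerivAt.comp z
      (toComplex.hasFDerivAt.const_mul (conj p.center))).neg.mul_const 2⁻¹
  rw [hv.fderiv]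
  simp only [smul_neg, neg_apply, smul_apply, ContinuousLinearMap.comp_apply,
    ContinuousLinearEquiv.coe_coe, smul_eq_mul, Complex.imCLM_apply]
  ring

lemma omega0_fderiv_twist (hg : ContDiff ℝ ∞ g) (u v : ℝ × ℝ) :
    omega0 (fderiv ℝ (p.twist g) z u) (fderiv ℝ (p.twist g) z v) = omega0 u v := by
  rw [omega0_eq_im, toComplex_fderiv_twist p z hg, toComplex_fderiv_twist p z hg,
    conj_circle_mul_mul_circle_mul, im_conj_mul_add_I_mul, fderiv_relSqDist, fderiv_relSqDist,
    omega0_eq_im]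
  ring

/-- The twist as an area-preserving diffeomorphism, compactly supported when `g` vanishes
from `b` on. -/
def twistDiffC (p : Disc) (g : ℝ → ℝ) (b : ℝ) (hg : ContDiff ℝ ∞ g) (hb : ∀ s, b ≤ s → g s = 0) :
    DiffC where
  toFun := p.twist g
  invFun := p.twist (-g)
  smooth := p.contDiff_twist hg
  smooth_inv := p.contDiff_twist hg.neg
  left_inv := p.twist_neg_twist
  right_inv z := by simpa only [neg_neg] using p.twist_neg_twist (g := -g) z
  area z := p.omega0_fderiv_twist z hg
  compact := ⟨_, p.isCompact_setOf_relSqDist_le b,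
    fun z hz => p.twist_eq_self z (hb _ (not_le.1 hz).le)⟩

lemma pullbackForm_twist_lambda0 (hg : ContDiff ℝ ∞ g) (u : ℝ × ℝ) :
    pullbackForm (p.twist g) lambda0 z u - lambda0 z u =
      p.relSqDist z * deriv g (p.relSqDist z) / 2 * fderiv ℝ p.relSqDist z u -
        (fderiv ℝ p.potential (p.twist g z) (fderiv ℝ (p.twist g) z u) -
          fderiv ℝ p.potential z u) := by
  set ζ := Circle.exp (g (p.relSqDist z) / p.radius ^ 2)
  set w := toComplex z - p.center
  set α := deriv g (p.relSqDist z) * fderiv ℝ p.relSqDist z u / p.radius ^ 2 with hα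
  set u' := fderiv ℝ (p.twist g) z u
  have hz : toComplex z = p.center + w := (add_sub_cancel _ _).symm
  have htwist : toComplex (p.twist g z) = p.center + ζ * w := p.toComplex_rotate ζ z
  have hu' : toComplex u' = ζ * (toComplex u + α * Complex.I * w) := p.toComplex_fderiv_twist z hg u
  have hαw : α * (conj w * w).re =
      p.relSqDist z * deriv g (p.relSqDist z) * fderiv ℝ p.relSqDist z u := by
    rw [hα, mul_comm (conj w), Complex.mul_conj, Complex.ofReal_re, ← Complex.sq_norm,
      ← radius_sq_mul_relSqDist]
    field_simp [p.radius_pos.ne']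
  have hnew : (conj (toComplex (p.twist g z)) * toComplex u').im =
      (conj p.center * toComplex u').im + (conj w * toComplex u).im + α * (conj w * w).re := by
    rw [htwist, map_add, add_mul, hu', conj_circle_mul_mul_circle_mul]
    simp only [Complex.add_im, Complex.mul_im, Complex.conj_re, Complex.mul_re, Complex.ofReal_re,
      Complex.ofReal_im, Complex.I_re, Complex.I_im, Complex.add_re, Complex.conj_im]
    ring
  have hold : (conj (toComplex z) * toComplex u).im =
      (conj p.center * toComplex u).im + (conj w * toComplex u).im := by
    rw [hz, map_add, add_mul, Complex.add_im]
  rw [pullbackForm, ContinuousLinearMap.comp_apply, lambda0_eq_im, lambda0_eq_im, hnew, hold, hαw,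
    fderiv_potential, fderiv_potential]
  ring

lemma isAction_twist (hg : ContDiff ℝ ∞ g) (hb : ∀ s, b ≤ s → g s = 0) (hS : ContDiff ℝ ∞ S)
    (hSb : ∀ s, b ≤ s → S s = 0) (hSg : ∀ s, deriv S s = s * deriv g s / 2) :
    IsAction (p.twistDiffC g b hg hb).toFun lambda0
      (S ∘ p.relSqDist - (p.potential ∘ p.twist g - p.potential)) := by
  have hv := p.contDiff_potential
  have ht := p.contDiff_twist hg
  refine ⟨(hS.comp p.contDiff_relSqDist).sub ((hv.comp ht).sub hv), ?_, fun z => ?_⟩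
  · refine HasCompactSupport.intro (p.isCompact_setOf_relSqDist_le b) fun z hz => ?_
    have hz' : b ≤ p.relSqDist z := (not_le.1 hz).le
    simp [hSb _ hz', p.twist_eq_self z (hb _ hz')]
  · have dρ := p.contDiff_relSqDist.differentiable (by simp) z
    have dS := hS.differentiable (by simp) (p.relSqDist z)
    have dv := hv.differentiable (by simp)
    have dt := ht.differentiable (by simp) z
    rw [fderiv_sub (dS.comp z dρ) (((dv _).comp z dt).sub (dv z)),
      fderiv_sub ((dv _).comp z dt) (dv z), fderiv_comp z (dv _) dt,
      (dS.hasDerivAt.comp_hasFDerivAt z dρ.hasFDerivAt).fderiv, hSg]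
    refine ContinuousLinearMap.ext fun u => ?_
    exact (p.pullbackForm_twist_lambda0 z hg u).symm

end Twist

end Disc

section Cutoff

/-- A smooth decreasing cutoff, equal to `1` up to `a` and to `0` from `b` on. -/
def cutoff (a b s : ℝ) : ℝ := 1 - Real.smoothTransition ((s - a) / (b - a))

/-- The action of the twist with angle profile `cutoff a b`: the antiderivative of
`s * deriv (cutoff a b) s / 2` vanishing from `b` on, in the form given by integration by parts. -/
def cutoffAction (a b s : ℝ) : ℝ := (s * cutoff a b s + ∫ t in s..b, cutoff a b t) / 2

variable {a b : ℝ} (s : ℝ)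

lemma contDiff_cutoff (a b : ℝ) : ContDiff ℝ ∞ (cutoff a b) :=
  contDiff_const.sub
    (Real.smoothTransition.contDiff.comp ((contDiff_id.sub contDiff_const).div_const _))

lemma cutoff_eq_one (hab : a < b) {s : ℝ} (h : s ≤ a) : cutoff a b s = 1 := by
  rw [cutoff, Real.smoothTransition.zero_of_nonpos, sub_zero]
  exact div_nonpos_of_nonpos_of_nonneg (sub_nonpos.2 h) (sub_pos.2 hab).le

lemma cutoff_eq_zero (hab : a < b) {s : ℝ} (h : b ≤ s) : cutoff a b s = 0 := by
  rw [cutoff, Real.smoothTransition.one_of_one_le, sub_self]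
  exact (one_le_div (sub_pos.2 hab)).2 (sub_le_sub_right h a)

lemma cutoff_nonneg : 0 ≤ cutoff a b s := sub_nonneg.2 (Real.smoothTransition.le_one _)

lemma cutoff_le_one : cutoff a b s ≤ 1 := sub_le_self _ (Real.smoothTransition.nonneg _)

lemma antitone_cutoff (hab : a < b) : Antitone (cutoff a b) := fun _ _ hst =>
  sub_le_sub_left (Real.smoothTransition.monotone
    (div_le_div_of_nonneg_right (sub_le_sub_right hst a) (sub_pos.2 hab).le)) 1

lemma intervalIntegrable_cutoff (s t : ℝ) : IntervalIntegrable (cutoff a b) volume s t :=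
  (contDiff_cutoff a b).continuous.intervalIntegrable s t

lemma hasDerivAt_cutoffAction :
    HasDerivAt (cutoffAction a b) (s * deriv (cutoff a b) s / 2) s := by
  have hcont := (contDiff_cutoff a b).continuous
  have hcutoff := ((contDiff_cutoff a b).differentiable (by simp) s).hasDerivAt
  have hint : HasDerivAt (fun u => ∫ t in u..b, cutoff a b t) (-cutoff a b s) s :=
    intervalIntegral.integral_hasDerivAt_left (intervalIntegrable_cutoff s b)
      hcont.aestronglyMeasurable.stronglyMeasurableAtFilter hcont.continuousAt
  refine (((hasDerivAt_id s).mul hcutoff).add hint).div_const 2 |>.congr_deriv ?_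
  simp

lemma contDiff_cutoffAction (a b : ℝ) : ContDiff ℝ ∞ (cutoffAction a b) := by
  refine contDiff_infty_iff_deriv.2
    ⟨fun s => (hasDerivAt_cutoffAction s).differentiableAt, ?_⟩
  have hderiv : deriv (cutoffAction a b) = fun s => s * deriv (cutoff a b) s / 2 :=
    funext fun s => (hasDerivAt_cutoffAction s).deriv
  rw [hderiv]
  exact (contDiff_id.mul (contDiff_infty_iff_deriv.1 (contDiff_cutoff a b)).2).div_const 2

lemma cutoffAction_eq_zero (hab : a < b) {s : ℝ} (h : b ≤ s) : cutoffAction a b s = 0 := by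
  have hint : ∫ t in s..b, cutoff a b t = ∫ _ in s..b, (0 : ℝ) :=
    intervalIntegral.integral_congr fun _ ht =>
      cutoff_eq_zero hab (Set.uIcc_of_ge h ▸ ht).1
  rw [cutoffAction, cutoff_eq_zero hab h, hint, intervalIntegral.integral_zero, mul_zero, add_zero,
    zero_div]

lemma cutoffAction_eq_of_le (hab : a < b) {s : ℝ} (h : s ≤ a) :
    cutoffAction a b s = cutoffAction a b a := by
  have hint : ∫ t in s..a, cutoff a b t = ∫ _ in s..a, (1 : ℝ) :=
    intervalIntegral.integral_congr fun _ ht =>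
      cutoff_eq_one hab (Set.uIcc_of_le h ▸ ht).2
  rw [cutoffAction, cutoffAction, cutoff_eq_one hab h, cutoff_eq_one hab le_rfl,
    ← intervalIntegral.integral_add_adjacent_intervals (intervalIntegrable_cutoff s a)
      (intervalIntegrable_cutoff a b), hint, integral_one]
  ring

lemma half_le_cutoffAction (hab : a < b) : a / 2 ≤ cutoffAction a b a := by
  have hint : 0 ≤ ∫ t in a..b, cutoff a b t :=
    intervalIntegral.integral_nonneg hab.le fun _ _ => cutoff_nonneg _
  rw [cutoffAction, cutoff_eq_one hab le_rfl]
  linarith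

lemma cutoffAction_le_half (hab : a < b) : cutoffAction a b a ≤ b / 2 := by
  have hint : ∫ t in a..b, cutoff a b t ≤ ∫ _ in a..b, (1 : ℝ) :=
    intervalIntegral.integral_mono_on hab.le (intervalIntegrable_cutoff a b) (by simp)
      fun _ _ => cutoff_le_one _
  rw [integral_one] at hint
  rw [cutoffAction, cutoff_eq_one hab le_rfl]
  linarith

lemma antitone_cutoffAction (ha : 0 ≤ a) (hab : a < b) : Antitone (cutoffAction a b) := by
  refine antitone_of_deriv_nonpos (fun s => (hasDerivAt_cutoffAction s).differentiableAt)
    fun s => ?_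
  rw [(hasDerivAt_cutoffAction s).deriv]
  rcases lt_or_ge s a with hs | hs
  · have hconst : cutoff a b =ᶠ[nhds s] fun _ => 1 := by
      filter_upwards [Iio_mem_nhds hs] with _ ht using cutoff_eq_one hab ht.le
    simp [hconst.deriv_eq]
  · exact div_nonpos_of_nonpos_of_nonneg (mul_nonpos_of_nonneg_of_nonpos (ha.trans hs)
      (antitone_cutoff hab).deriv_nonpos) zero_le_two

lemma cutoffAction_nonneg (ha : 0 ≤ a) (hab : a < b) : 0 ≤ cutoffAction a b s := by
  rw [← cutoffAction_eq_zero hab (le_max_right s b)]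
  exact antitone_cutoffAction ha hab (le_max_left s b)

lemma cutoffAction_le (ha : 0 ≤ a) (hab : a < b) : cutoffAction a b s ≤ cutoffAction a b a := by
  rw [← cutoffAction_eq_of_le hab (min_le_right s a)]
  exact antitone_cutoffAction ha hab (min_le_left s a)

lemma cutoffAction_min_one (hab : a < b) (hb : b ≤ 1) :
    cutoffAction a b (min s 1) = cutoffAction a b s := by
  rcases le_total s 1 with hs | hs
  · rw [min_eq_left hs]
  · rw [min_eq_right hs, cutoffAction_eq_zero hab hb, cutoffAction_eq_zero hab (hb.trans hs)]

lemma cutoffAction_max (hab : a < b) :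
    cutoffAction a b (max s a) = cutoffAction a b s := by
  rcases le_total s a with hs | hs
  · rw [max_eq_right hs, cutoffAction_eq_of_le hab hs]
  · rw [max_eq_left hs]

end Cutoff

namespace Disc

/-- The twist with angle profile `c * cutoff a b`. -/
def cutoffTwist (p : Disc) {a b : ℝ} (hab : a < b) (c : ℝ) : DiffC :=
  p.twistDiffC (fun s => c * cutoff a b s) b (contDiff_const.mul (contDiff_cutoff a b))
    fun s hs => by rw [cutoff_eq_zero hab hs, mul_zero]

variable (p : Disc) {a b : ℝ} (hab : a < b) (c : ℝ) {z : ℝ × ℝ}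

lemma cutoffTwist_toFun : (p.cutoffTwist hab c).toFun = p.twist fun s => c * cutoff a b s := rfl

lemma relSqDist_cutoffTwist : p.relSqDist ((p.cutoffTwist hab c).toFun z) = p.relSqDist z := by
  rw [cutoffTwist_toFun, relSqDist_twist]

lemma cutoffTwist_eq_self (h : b ≤ p.relSqDist z) : (p.cutoffTwist hab c).toFun z = z := by
  rw [cutoffTwist_toFun, twist_eq_self]
  rw [cutoff_eq_zero hab h, mul_zero]

lemma isAction_cutoffTwist_add_fderiv {U : ℝ × ℝ → ℝ} (hU : ContDiff ℝ ∞ U)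
    (hUc : HasCompactSupport U)
    (hUp : ∀ z, U ((p.cutoffTwist hab c).toFun z) - U z =
      p.potential ((p.cutoffTwist hab c).toFun z) - p.potential z) :
    IsAction (p.cutoffTwist hab c).toFun (lambda0 + fderiv ℝ U)
      fun z => c * cutoffAction a b (p.relSqDist z) := by
  have hderiv (s : ℝ) : deriv (fun s => c * cutoffAction a b s) s =
      s * deriv (fun s => c * cutoff a b s) s / 2 := by
    rw [((hasDerivAt_cutoffAction s).const_mul c).deriv,
      deriv_const_mul c ((contDiff_cutoff a b).differentiable (by simp) s)]
    ring
  have htwist : IsAction (p.cutoffTwist hab c).toFun lambda0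
      ((fun s => c * cutoffAction a b s) ∘ p.relSqDist -
        (p.potential ∘ (p.cutoffTwist hab c).toFun - p.potential)) :=
    p.isAction_twist (contDiff_const.mul (contDiff_cutoff a b)) _
      (contDiff_const.mul (contDiff_cutoffAction a b))
      (fun s hs => by rw [cutoffAction_eq_zero hab hs, mul_zero]) hderiv
  convert htwist.add_fderiv hU hUc using 1
  funext z
  simp only [Pi.add_apply, Pi.sub_apply, Function.comp_apply, hUp z]
  ring

end Disc

section Packing

lemma exists_finset_disjoint_closedBall_lt_measure {α : Type*} [MetricSpace α]
    [SecondCountableTopology α] [MeasurableSpace α] [OpensMeasurableSpace α]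
    [HasBesicovitchCovering α] (μ : Measure α) [SFinite μ] {U : Set α} (hU : IsOpen U)
    {c : ENNReal} (hc : c < μ U) :
    ∃ (s : Finset α) (r : α → ℝ), (∀ x ∈ s, 0 < r x ∧ Metric.closedBall x (r x) ⊆ U) ∧
      (s : Set α).PairwiseDisjoint (fun x => Metric.closedBall x (r x)) ∧
      c < ∑ x ∈ s, μ (Metric.closedBall x (r x)) := by
  classical
  have hsmall : ∀ x ∈ U, ∀ δ > 0, ({r | Metric.closedBall x r ⊆ U} ∩ Set.Ioo 0 δ).Nonempty := by
    intro x hx δ hδ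
    obtain ⟨ε, hε, hball⟩ := Metric.nhds_basis_closedBall.mem_iff.1 (hU.mem_nhds hx)
    exact ⟨min ε (δ / 2), (Metric.closedBall_subset_closedBall (min_le_left _ _)).trans hball,
      lt_min hε (half_pos hδ), (min_le_right _ _).trans_lt (half_lt_self hδ)⟩
  obtain ⟨t, r, ht, -, hr, hcover, hdisj⟩ :=
    Besicovitch.exists_disjoint_closedBall_covering_ae μ _ U hsmall (fun _ => 1) fun _ _ => one_pos
  have hsum : c < ∑' x : t, μ (Metric.closedBall (x : α) (r x)) := by
    rw [← measure_biUnion ht hdisj fun _ _ => Metric.isClosed_closedBall.measurableSet]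
    exact hc.trans_le (measure_mono_ae (ae_le_set.2 hcover))
  rw [ENNReal.tsum_eq_iSup_sum, lt_iSup_iff] at hsum
  obtain ⟨s, hs⟩ := hsum
  have hst : ∀ x ∈ s.map (Function.Embedding.subtype _), x ∈ t := by
    simp only [Finset.mem_map]
    rintro _ ⟨x, -, rfl⟩
    exact x.2
  exact ⟨s.map (Function.Embedding.subtype _), r,
    fun x hx => ⟨(hr x (hst x hx)).2.1, (hr x (hst x hx)).1⟩, hdisj.subset hst,
    by simpa using hs⟩

namespace Disc

/-- The closed disc as a subset of `ℂ`. -/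
def toSet (p : Disc) : Set ℂ := Metric.closedBall p.center p.radius

lemma center_mem_toSet (p : Disc) : p.center ∈ p.toSet :=
  Metric.mem_closedBall_self p.radius_pos.le

lemma volume_closedBall_eq_ofReal (c : ℂ) {r : ℝ} (hr : 0 ≤ r) :
    volume (Metric.closedBall c r) = ENNReal.ofReal (Real.pi * r ^ 2) := by
  rw [Complex.volume_closedBall, mul_comm, ENNReal.ofReal_mul Real.pi_pos.le,
    ENNReal.ofReal_pow hr, ← NNReal.coe_real_pi, ENNReal.ofReal_coe_nnreal]

lemma toSet_smul (ζ : Circle) (p : Disc) : (ζ • p).toSet = ζ • p.toSet := by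
  have := smul_closedBall' ζ.coe_ne_zero p.center p.radius
  rw [Circle.norm_coe, one_mul] at this
  exact this.symm

lemma exists_finset_pairwiseDisjoint_lt_sum_area {U : Set ℂ} (hU : IsOpen U) {c : ℝ}
    (hc : c < volume.real U) :
    ∃ F : Finset Disc, (∀ p ∈ F, p.toSet ⊆ U) ∧ (F : Set Disc).PairwiseDisjoint toSet ∧
      c < ∑ p ∈ F, Real.pi * p.radius ^ 2 := by
  classical
  rcases lt_or_ge c 0 with hneg | hnonneg
  · exact ⟨∅, by simp, by simp, by simpa using hneg⟩
  have hfin : volume U ≠ ⊤ := fun htop => by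
    rw [measureReal_def, htop, ENNReal.toReal_top] at hc
    exact hc.not_ge hnonneg
  obtain ⟨s, r, hs, hdisj, hsum⟩ := exists_finset_disjoint_closedBall_lt_measure volume hU
    ((ENNReal.ofReal_lt_iff_lt_toReal hnonneg hfin).2 hc)
  let toDisc : s ↪ Disc := ⟨fun x => ⟨x, r x, (hs x x.2).1⟩,
    fun x y h => Subtype.ext (congrArg center h)⟩
  refine ⟨s.attach.map toDisc, ?_, ?_, ?_⟩
  · simp only [Finset.mem_map]
    rintro _ ⟨x, -, rfl⟩
    exact (hs x x.2).2
  · rw [Finset.coe_map]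
    rintro _ ⟨x, -, rfl⟩ _ ⟨y, -, rfl⟩ hxy
    exact hdisj x.2 y.2 fun h => hxy (congrArg toDisc (Subtype.ext h))
  · rw [Finset.sum_map, ← ENNReal.ofReal_lt_ofReal_iff_of_nonneg hnonneg,
      ENNReal.ofReal_sum_of_nonneg fun p _ => by positivity]
    rw [← Finset.sum_attach] at hsum
    exact hsum.trans_eq (Finset.sum_congr rfl fun x _ =>
      volume_closedBall_eq_ofReal x (hs x x.2).1.le)

/-- A finite family of disjoint closed discs in `{‖z‖² ≤ a}`, none centred at the origin, which is
invariant under multiplication by `ζ`. -/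
structure IsRotationPacking (ζ : Circle) (a : ℝ) (P : Finset Disc) : Prop where
  norm_sq_le : ∀ p ∈ P, ∀ z ∈ p.toSet, ‖z‖ ^ 2 ≤ a
  center_ne_zero : ∀ p ∈ P, p.center ≠ 0
  pairwiseDisjoint : (P : Set Disc).PairwiseDisjoint toSet
  smul_mem : ∀ p ∈ P, ζ • p ∈ P

-- Since `(ζ ^ k * z) ^ n = z ^ n`, injectivity of `z ↦ z ^ n` on `U` separates the rotated copies
-- of `U`.
lemma smul_eq_smul_of_mem_toSet {n : ℕ} {ζ : Circle} (hζ : IsPrimitiveRoot ζ n) {U : Set ℂ}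
    (h0 : (0 : ℂ) ∉ U) (hinj : Set.InjOn (· ^ n) U) {F : Finset Disc} (hFU : ∀ p ∈ F, p.toSet ⊆ U)
    (hF : (F : Set Disc).PairwiseDisjoint toSet) {j k : ℕ} (hj : j < n) (hk : k < n)
    {p q : Disc} (hp : p ∈ F) (hq : q ∈ F) {z : ℂ} (hzp : z ∈ (ζ ^ j • p).toSet)
    (hzq : z ∈ (ζ ^ k • q).toSet) : j = k ∧ p = q := by
  rw [toSet_smul] at hzp hzq
  obtain ⟨u, hu, rfl⟩ := hzp
  obtain ⟨w, hw, hwu⟩ := hzq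
  simp only [smul_eq_mul, Circle.coe_pow] at hwu
  have hpow (i : ℕ) (v : ℂ) : ((ζ : ℂ) ^ i * v) ^ n = v ^ n := by
    rw [mul_pow, pow_right_comm, ← Circle.coe_pow, hζ.pow_eq_one, Circle.coe_one, one_pow, one_mul]
  obtain rfl : w = u := hinj (hFU q hq hw) (hFU p hp hu) <| by
    simpa only [hpow] using congrArg (· ^ n) hwu
  have hw0 : w ≠ 0 := fun h => h0 (h ▸ hFU p hp hu)
  have hkj : ζ ^ k = ζ ^ j := Circle.ext (by simpa using mul_right_cancel₀ hw0 hwu)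
  exact ⟨hζ.pow_inj hj hk hkj.symm, hF.elim hp hq (Set.not_disjoint_iff.2 ⟨w, hu, hw⟩)⟩

lemma exists_isRotationPacking {n : ℕ} (hn : 0 < n) {ζ : Circle} (hζ : IsPrimitiveRoot ζ n)
    {U : Set ℂ} (hU : IsOpen U) (h0 : (0 : ℂ) ∉ U) (hinj : Set.InjOn (· ^ n) U) {a : ℝ}
    (hUa : ∀ z ∈ U, ‖z‖ ^ 2 ≤ a) {c : ℝ} (hc : c < volume.real U) :
    ∃ P : Finset Disc, IsRotationPacking ζ a P ∧ n * c < ∑ p ∈ P, Real.pi * p.radius ^ 2 := by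
  classical
  obtain ⟨F, hFU, hF, hsum⟩ := exists_finset_pairwiseDisjoint_lt_sum_area hU hc
  have hunique {j k : ℕ} (hj : j < n) (hk : k < n) {p q : Disc} (hp : p ∈ F) (hq : q ∈ F) {z : ℂ} :
      z ∈ (ζ ^ j • p).toSet → z ∈ (ζ ^ k • q).toSet → j = k ∧ p = q :=
    smul_eq_smul_of_mem_toSet hζ h0 hinj hFU hF hj hk hp hq
  let P := (Finset.range n ×ˢ F).image fun x => ζ ^ x.1 • x.2
  have hP {p : Disc} : p ∈ P ↔ ∃ k < n, ∃ q ∈ F, ζ ^ k • q = p := by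
    simp [P, and_assoc]
  have hinjP : Set.InjOn (fun x : ℕ × Disc => ζ ^ x.1 • x.2) (Finset.range n ×ˢ F : Finset _) := by
    rintro ⟨j, p⟩ hjp ⟨k, q⟩ hkq h
    simp only [Finset.mem_coe, Finset.mem_product, Finset.mem_range] at hjp hkq h
    obtain ⟨hjk, hpq⟩ := hunique hjp.1 hkq.1 hjp.2 hkq.2 (center_mem_toSet _)
      (h ▸ center_mem_toSet _)
    exact Prod.ext hjk hpq
  refine ⟨P, ⟨?_, ?_, ?_, ?_⟩, ?_⟩
  · intro p hp z hz
    obtain ⟨k, -, q, hq, rfl⟩ := hP.1 hp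
    rw [toSet_smul] at hz
    obtain ⟨w, hw, rfl⟩ := hz
    simpa only [smul_eq_mul, norm_mul, Circle.norm_coe, one_mul] using hUa w (hFU q hq hw)
  · intro p hp
    obtain ⟨k, -, q, hq, rfl⟩ := hP.1 hp
    exact mul_ne_zero (Circle.coe_ne_zero _) fun h => h0 (h ▸ hFU q hq q.center_mem_toSet)
  · intro p hp q hq hpq
    obtain ⟨j, hj, p₀, hp₀, rfl⟩ := hP.1 hp
    obtain ⟨k, hk, q₀, hq₀, rfl⟩ := hP.1 hq
    refine Set.disjoint_left.2 fun z hzp hzq => hpq ?_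
    obtain ⟨rfl, rfl⟩ := hunique hj hk hp₀ hq₀ hzp hzq
    rfl
  · intro p hp
    obtain ⟨k, -, q, hq, rfl⟩ := hP.1 hp
    refine hP.2 ⟨(k + 1) % n, Nat.mod_lt _ hn, q, hq, ?_⟩
    rw [hζ.eq_orderOf, pow_mod_orderOf, pow_succ', mul_smul]
  · rw [Finset.sum_image hinjP, Finset.sum_product]
    simpa [smul_radius] using mul_lt_mul_of_pos_left hsum (Nat.cast_pos.2 hn : (0 : ℝ) < n)

end Disc

/-- The circular sector of radius `R` and half-angle `θ` about the positive real axis. -/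
def sector (R θ : ℝ) : Set ℂ :=
  Complex.polarCoord.source ∩ Complex.polarCoord ⁻¹' (Set.Ioo 0 R ×ˢ Set.Ioo (-θ) θ)

lemma isOpen_sector (R θ : ℝ) : IsOpen (sector R θ) :=
  Complex.polarCoord.isOpen_inter_preimage (isOpen_Ioo.prod isOpen_Ioo)

lemma norm_mem_of_mem_sector {R θ : ℝ} {z : ℂ} (hz : z ∈ sector R θ) :
    ‖z‖ ∈ Set.Ioo 0 R := by
  have := hz.2.1
  rwa [Complex.polarCoord_apply] at this

lemma arg_mem_of_mem_sector {R θ : ℝ} {z : ℂ} (hz : z ∈ sector R θ) :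
    z.arg ∈ Set.Ioo (-θ) θ := hz.2.2

lemma volume_real_sector {R θ : ℝ} (hR : 0 ≤ R) (hθ : 0 ≤ θ) (hθπ : θ ≤ Real.pi) :
    volume.real (sector R θ) = R ^ 2 * θ := by
  set rect := Set.Ioo 0 R ×ˢ Set.Ioo (-θ) θ
  have hrect : MeasurableSet rect := measurableSet_Ioo.prod measurableSet_Ioo
  have hsub : rect ⊆ polarCoord.target := by
    rintro ⟨r, t⟩ ⟨hr, ht⟩
    exact ⟨hr.1, (neg_le_neg hθπ).trans_lt ht.1, ht.2.trans_le hθπ⟩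
  have hmem {x : ℝ × ℝ} (hx : x ∈ polarCoord.target) :
      Complex.polarCoord.symm x ∈ sector R θ ↔ x ∈ rect := by
    have hx' : x ∈ Complex.polarCoord.target := hx
    rw [sector, Set.mem_inter_iff, Set.mem_preimage, Complex.polarCoord.right_inv hx',
      and_iff_right (Complex.polarCoord.map_target hx')]
  calc volume.real (sector R θ)
      = ∫ z, (sector R θ).indicator 1 z :=
        (integral_indicator_one (isOpen_sector R θ).measurableSet).symm
    _ = ∫ x in polarCoord.target,
          x.1 • (sector R θ).indicator (1 : ℂ → ℝ) (Complex.polarCoord.symm x) :=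
        (Complex.integral_comp_polarCoord_symm _).symm
    _ = ∫ x in polarCoord.target, rect.indicator (fun x => x.1 * 1) x := by
        refine setIntegral_congr_fun polarCoord.open_target.measurableSet fun x hx => ?_
        by_cases h : x ∈ rect
        · rw [Set.indicator_of_mem ((hmem hx).2 h), Set.indicator_of_mem h]
          rfl
        · rw [Set.indicator_of_notMem (mt (hmem hx).1 h), Set.indicator_of_notMem h, smul_zero]
    _ = ∫ x in rect, x.1 * 1 := by
        rw [setIntegral_indicator hrect, Set.inter_eq_right.2 hsub]
    _ = (∫ r in Set.Ioo 0 R, r) * ∫ _ in Set.Ioo (-θ) θ, 1 :=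
        setIntegral_prod_mul (fun r : ℝ => r) (fun _ : ℝ => (1 : ℝ)) _ _
    _ = R ^ 2 * θ := by
        rw [← integral_Ioc_eq_integral_Ioo, ← intervalIntegral.integral_of_le hR, integral_id,
          setIntegral_const, Real.volume_real_Ioo_of_le (by linarith)]
        simp only [ne_eq, OfNat.ofNat_ne_zero, not_false_eq_true, zero_pow, sub_zero,
          sub_neg_eq_add, smul_eq_mul, mul_one]
        ring

lemma injOn_pow_sector {n : ℕ} (hn : n ≠ 0) (R : ℝ) :
    Set.InjOn (· ^ n) (sector R (Real.pi / n)) :=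
  Set.LeftInvOn.injOn (f₁' := fun z : ℂ => z ^ (n⁻¹ : ℂ)) fun _ hz =>
    Complex.pow_cpow_nat_inv hn (arg_mem_of_mem_sector hz).1 (arg_mem_of_mem_sector hz).2.le

lemma isPrimitiveRoot_circleExp {n : ℕ} (hn : n ≠ 0) :
    IsPrimitiveRoot (Circle.exp (2 * Real.pi / n)) n := by
  refine IsPrimitiveRoot.of_map_of_injective (f := Circle.coeHom) ?_ Circle.coe_injective
  convert Complex.isPrimitiveRoot_exp n hn using 1
  change ((Circle.exp (2 * Real.pi / n) : Circle) : ℂ) = _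
  rw [Circle.coe_exp]
  push_cast
  ring_nf

end Packing

namespace Disc

section RotatedTwist

namespace IsRotationPacking

variable {ζ : Circle} {P : Finset Disc} {a : ℝ} {p q : Disc} {z : ℝ × ℝ}

lemma eq_of_relSqDist_le_one (h : IsRotationPacking ζ a P) (hp : p ∈ P) (hq : q ∈ P)
    (hzp : p.relSqDist z ≤ 1) (hzq : q.relSqDist z ≤ 1) : p = q :=
  h.pairwiseDisjoint.elim hp hq
    (Set.not_disjoint_iff.2
      ⟨_, (p.relSqDist_le_one_iff z).1 hzp, (q.relSqDist_le_one_iff z).1 hzq⟩)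

lemma relSqDist_unit_le (h : IsRotationPacking ζ a P) (hp : p ∈ P) (hz : p.relSqDist z ≤ 1) :
    unit.relSqDist z ≤ a := by
  rw [relSqDist_unit]
  exact h.norm_sq_le p hp _ ((p.relSqDist_le_one_iff z).1 hz)

lemma one_lt_relSqDist (h : IsRotationPacking ζ a P) (hp : p ∈ P) (hz : a < unit.relSqDist z) :
    1 < p.relSqDist z :=
  lt_of_not_ge fun hzp => hz.not_ge (h.relSqDist_unit_le hp hzp)

lemma map_toPerm (h : IsRotationPacking ζ a P) :
    P.map (MulAction.toPerm ζ : Equiv.Perm Disc).toEmbedding = P := by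
  refine Finset.map_eq_of_subset fun q hq => ?_
  obtain ⟨p, hp, rfl⟩ := Finset.mem_map.1 hq
  exact h.smul_mem p hp

lemma sum_smul {M : Type*} [AddCommMonoid M] (h : IsRotationPacking ζ a P) (F : Disc → M) :
    ∑ p ∈ P, F (ζ • p) = ∑ p ∈ P, F p := by
  conv_rhs => rw [← h.map_toPerm, Finset.sum_map]
  rfl

lemma pow_smul_mem (h : IsRotationPacking ζ a P) (hp : p ∈ P) (k : ℕ) : ζ ^ k • p ∈ P := by
  induction k with
  | zero => rwa [pow_zero, one_smul]
  | succ k ih =>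
    rw [pow_succ', mul_smul]
    exact h.smul_mem _ ih

end IsRotationPacking

/-- The composition of the twists with angle profile `c * cutoff a b` in the discs of `P`. -/
def packingTwist (P : Finset Disc) {a b : ℝ} (hab : a < b) (c : ℝ) : DiffC :=
  (P.toList.map fun p => p.cutoffTwist hab c).prod

/-- The function `U` whose differential turns `λ₀` into a primitive of `ω₀` which, near every disc
`{p.relSqDist ≤ b}` of the packing, is invariant under the rotations about its centre. -/
def packingPotential (P : Finset Disc) (b : ℝ) (z : ℝ × ℝ) : ℝ :=
  ∑ p ∈ P, cutoff b 1 (p.relSqDist z) * p.potential z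

/-- A twist of the unit disc, which is a rotation by the angle `θ` near the packing `P`, composed
with twists in the discs of `P`. -/
def rotatedTwist (P : Finset Disc) {a b : ℝ} (hab : a < b) (θ c : ℝ) : DiffC :=
  unit.cutoffTwist hab θ * packingTwist P hab c

/-- The action of `rotatedTwist P _ θ c` for the primitive `λ₀ + dU` with
`U = packingPotential P b`. -/
def rotatedTwistAction (P : Finset Disc) (a b θ c : ℝ) (z : ℝ × ℝ) : ℝ :=
  θ * cutoffAction a b (unit.relSqDist z) + c * ∑ p ∈ P, cutoffAction a b (p.relSqDist z)

section PackingTwist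

variable {P : Finset Disc} {a b : ℝ} {hab : a < b} {θ c : ℝ} {z : ℝ × ℝ}

lemma packingTwist_eq_self (hz : ∀ p ∈ P, b ≤ p.relSqDist z) :
    (packingTwist P hab c).toFun z = z :=
  DiffC.list_prod_toFun_eq_self <| List.forall_mem_map.2 fun p hp =>
    cutoffTwist_eq_self p hab c (hz p (Finset.mem_toList.1 hp))

lemma contDiff_packingPotential (P : Finset Disc) (b : ℝ) :
    ContDiff ℝ ∞ (packingPotential P b) :=
  ContDiff.sum fun p _ => ((contDiff_cutoff b 1).comp p.contDiff_relSqDist).mul p.contDiff_potential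

lemma rotatedTwist_eq_unit_cutoffTwist (hb : b ≤ 1) (hz : ∀ p ∈ P, 1 ≤ p.relSqDist z) :
    (rotatedTwist P hab θ c).toFun z = (unit.cutoffTwist hab θ).toFun z :=
  congrArg (unit.cutoffTwist hab θ).toFun (packingTwist_eq_self fun p hp => hb.trans (hz p hp))

lemma rotatedTwistAction_of_one_le (hab : a < b) (hb : b ≤ 1) (θ c : ℝ)
    (hz : ∀ p ∈ P, 1 ≤ p.relSqDist z) :
    rotatedTwistAction P a b θ c z = θ * cutoffAction a b (unit.relSqDist z) := by
  rw [rotatedTwistAction, Finset.sum_eq_zero fun p hp =>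
    cutoffAction_eq_zero hab (hb.trans (hz p hp)), mul_zero, add_zero]

end PackingTwist

section UnitTwist

variable {a b : ℝ} {hab : a < b} {θ : ℝ} {z : ℝ × ℝ}

lemma unit_cutoffTwist_eq_rotate (hz : unit.relSqDist z ≤ a) :
    (unit.cutoffTwist hab θ).toFun z = unit.rotate (Circle.exp θ) z := by
  rw [cutoffTwist_toFun, twist, cutoff_eq_one hab hz, mul_one,
    unit_radius, one_pow, div_one]

lemma comp_unit_cutoffTwist {F : ℝ × ℝ → ℝ} (hF : ∀ z, a < unit.relSqDist z → F z = 0)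
    (hrot : ∀ z, F (unit.rotate (Circle.exp θ) z) = F z) :
    F ∘ (unit.cutoffTwist hab θ).toFun = F := by
  funext z
  rcases le_or_gt (unit.relSqDist z) a with hz | hz
  · rw [Function.comp_apply, unit_cutoffTwist_eq_rotate hz, hrot]
  · rw [Function.comp_apply, hF z hz, hF _ ((relSqDist_cutoffTwist _ _ _).symm ▸ hz)]

lemma unit_cutoffTwist_eq_self_of_iterate {k : ℕ} (hk : 0 < k) (hθ : 0 ≤ θ)
    (hkθ : k * θ < 2 * Real.pi) (hz : (unit.cutoffTwist hab θ).toFun^[k] z = z) :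
    (unit.cutoffTwist hab θ).toFun z = z := by
  have hangle (s : ℝ) : θ * cutoff a b s / unit.radius ^ 2 = θ * cutoff a b s := by
    rw [unit_radius, one_pow, div_one]
  rw [cutoffTwist_toFun] at hz ⊢
  refine unit.twist_eq_self_of_iterate z hk ?_ ?_ hz
  · rw [hangle]
    exact mul_nonneg hθ (cutoff_nonneg _)
  · rw [hangle, ← mul_assoc]
    exact (mul_le_of_le_one_right (by positivity) (cutoff_le_one _)).trans_lt hkθ

end UnitTwist

namespace IsRotationPacking

variable {θ : ℝ} {P : Finset Disc} {a b : ℝ} {p q : Disc} {z : ℝ × ℝ} {hab : a < b} {c : ℝ}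
  {ζ : Circle}

lemma packingPotential_eq (h : IsRotationPacking ζ a P) (hb : b < 1) (hp : p ∈ P)
    (hz : p.relSqDist z ≤ b) : packingPotential P b z = p.potential z := by
  rw [packingPotential, Finset.sum_eq_single_of_mem p hp, cutoff_eq_one hb hz, one_mul]
  intro q hq hqp
  have hzq : 1 < q.relSqDist z := lt_of_not_ge fun hzq =>
    hqp (h.eq_of_relSqDist_le_one hq hp hzq (hz.trans hb.le))
  rw [cutoff_eq_zero hb hzq.le, zero_mul]

lemma packingPotential_eq_zero (h : IsRotationPacking ζ a P) (hb : b < 1)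
    (hz : a < unit.relSqDist z) : packingPotential P b z = 0 :=
  Finset.sum_eq_zero fun p hp => by
    rw [cutoff_eq_zero hb (h.one_lt_relSqDist hp hz).le, zero_mul]

lemma packingPotential_rotate (h : IsRotationPacking ζ a P) (b : ℝ) (z : ℝ × ℝ) :
    packingPotential P b (unit.rotate ζ z) = packingPotential P b z := by
  rw [packingPotential, ← h.sum_smul, packingPotential]
  simp only [relSqDist_smul_rotate, potential_smul_rotate]

lemma hasCompactSupport_packingPotential (h : IsRotationPacking ζ a P) (hb : b < 1) :
    HasCompactSupport (packingPotential P b) :=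
  HasCompactSupport.intro (unit.isCompact_setOf_relSqDist_le a) fun _ hz =>
    h.packingPotential_eq_zero hb (not_le.1 hz)

lemma lambda0_add_fderiv_packingPotential (h : IsRotationPacking ζ a P) (hb : b < 1)
    (hz : a < unit.relSqDist z) : (lambda0 + fderiv ℝ (packingPotential P b)) z = lambda0 z := by
  have hzero : packingPotential P b =ᶠ[nhds z] fun _ => 0 := by
    filter_upwards [unit.contDiff_relSqDist.continuous.continuousAt.eventually_const_lt hz]
      with w hw using h.packingPotential_eq_zero hb hw
  rw [Pi.add_apply, hzero.fderiv_eq, fderiv_const_apply, add_zero]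

lemma sum_cutoffAction_eq_zero (h : IsRotationPacking ζ a P) (hab : a < b) (hb : b ≤ 1)
    (hz : a < unit.relSqDist z) : ∑ p ∈ P, cutoffAction a b (p.relSqDist z) = 0 :=
  Finset.sum_eq_zero fun _ hp =>
    cutoffAction_eq_zero hab (hb.trans (h.one_lt_relSqDist hp hz).le)

lemma sum_cutoffAction_eq (h : IsRotationPacking ζ a P) (hab : a < b) (hb : b ≤ 1) (hp : p ∈ P)
    (hz : p.relSqDist z ≤ 1) :
    ∑ q ∈ P, cutoffAction a b (q.relSqDist z) = cutoffAction a b (p.relSqDist z) :=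
  Finset.sum_eq_single_of_mem p hp fun _ hq hqp => cutoffAction_eq_zero hab <| hb.trans <|
    (lt_of_not_ge fun hzq => hqp (h.eq_of_relSqDist_le_one hq hp hzq hz)).le

lemma sum_cutoffAction_rotate (h : IsRotationPacking ζ a P) (a' b : ℝ) (z : ℝ × ℝ) :
    ∑ p ∈ P, cutoffAction a' b (p.relSqDist (unit.rotate ζ z)) =
      ∑ p ∈ P, cutoffAction a' b (p.relSqDist z) := by
  rw [← h.sum_smul]
  simp only [relSqDist_smul_rotate]

-- On a disc `p ≠ q` of the packing one only knows that `q.relSqDist` exceeds `1`, whence the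
-- truncation.
lemma min_relSqDist_comp_cutoffTwist (h : IsRotationPacking ζ a P) (hb : b ≤ 1) (c : ℝ)
    (hp : p ∈ P) (hq : q ∈ P) :
    (fun z => min (q.relSqDist z) 1) ∘ (p.cutoffTwist hab c).toFun =
      fun z => min (q.relSqDist z) 1 := by
  funext z
  rw [Function.comp_apply]
  rcases eq_or_ne p q with rfl | hpq
  · rw [relSqDist_cutoffTwist]
  rcases le_total b (p.relSqDist z) with hz | hz
  · rw [cutoffTwist_eq_self p hab c hz]
  have hq_outside {w : ℝ × ℝ} (hw : p.relSqDist w ≤ b) : min (q.relSqDist w) 1 = 1 :=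
    min_eq_right <| le_of_not_ge fun hwq =>
      hpq (h.eq_of_relSqDist_le_one hp hq (hw.trans hb) hwq)
  rw [hq_outside hz, hq_outside ((relSqDist_cutoffTwist p hab c).trans_le hz)]

lemma max_relSqDist_unit_comp_cutoffTwist (h : IsRotationPacking ζ a P) (hb : b ≤ 1) (c : ℝ)
    (hp : p ∈ P) :
    (fun z => max (unit.relSqDist z) a) ∘ (p.cutoffTwist hab c).toFun =
      fun z => max (unit.relSqDist z) a := by
  funext z
  rw [Function.comp_apply]
  rcases le_total b (p.relSqDist z) with hz | hz
  · rw [cutoffTwist_eq_self p hab c hz]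
  have hunit {w : ℝ × ℝ} (hw : p.relSqDist w ≤ b) : max (unit.relSqDist w) a = a :=
    max_eq_right (h.relSqDist_unit_le hp (hw.trans hb))
  rw [hunit hz, hunit ((relSqDist_cutoffTwist p hab c).trans_le hz)]

lemma min_relSqDist_packingTwist (h : IsRotationPacking ζ a P) (hb : b ≤ 1) (c : ℝ)
    (hq : q ∈ P) (z : ℝ × ℝ) :
    min (q.relSqDist ((packingTwist P hab c).toFun z)) 1 = min (q.relSqDist z) 1 :=
  congrFun (DiffC.comp_list_prod_toFun <| List.forall_mem_map.2 fun _ hp =>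
    h.min_relSqDist_comp_cutoffTwist hb c (Finset.mem_toList.1 hp) hq) z

lemma max_relSqDist_unit_packingTwist (h : IsRotationPacking ζ a P) (hb : b ≤ 1) (c : ℝ)
    (z : ℝ × ℝ) :
    max (unit.relSqDist ((packingTwist P hab c).toFun z)) a = max (unit.relSqDist z) a :=
  congrFun (DiffC.comp_list_prod_toFun <| List.forall_mem_map.2 fun _ hp =>
    h.max_relSqDist_unit_comp_cutoffTwist hb c (Finset.mem_toList.1 hp)) z

lemma isAction_cutoffTwist (h : IsRotationPacking ζ a P) (hb : b < 1) (c : ℝ) (hp : p ∈ P) :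
    IsAction (p.cutoffTwist hab c).toFun (lambda0 + fderiv ℝ (packingPotential P b))
      fun z => c * cutoffAction a b (p.relSqDist z) := by
  refine isAction_cutoffTwist_add_fderiv p hab c (contDiff_packingPotential P b)
    (h.hasCompactSupport_packingPotential hb) fun z => ?_
  rcases le_total b (p.relSqDist z) with hz | hz
  · rw [cutoffTwist_eq_self p hab c hz, sub_self, sub_self]
  · rw [h.packingPotential_eq hb hp hz,
      h.packingPotential_eq hb hp ((relSqDist_cutoffTwist p hab c).trans_le hz)]

lemma isAction_unit_cutoffTwist (h : IsRotationPacking (Circle.exp θ) a P) (hb : b < 1) :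
    IsAction (unit.cutoffTwist hab θ).toFun (lambda0 + fderiv ℝ (packingPotential P b))
      fun z => θ * cutoffAction a b (unit.relSqDist z) := by
  refine isAction_cutoffTwist_add_fderiv unit hab θ (contDiff_packingPotential P b)
    (h.hasCompactSupport_packingPotential hb) fun z => ?_
  have hinv := comp_unit_cutoffTwist (hab := hab)
    (fun _ => h.packingPotential_eq_zero hb) (h.packingPotential_rotate b)
  rw [unit_potential, unit_potential, ← Function.comp_apply (f := packingPotential P b), hinv,
    sub_self, sub_self]

lemma cutoffAction_relSqDist_cutoffTwist (h : IsRotationPacking ζ a P) (hab : a < b) (hb : b ≤ 1)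
    (c : ℝ) (hp : p ∈ P) (hq : q ∈ P) (z : ℝ × ℝ) :
    cutoffAction a b (q.relSqDist ((p.cutoffTwist hab c).toFun z)) =
      cutoffAction a b (q.relSqDist z) := by
  have hmin := congrFun (h.min_relSqDist_comp_cutoffTwist (hab := hab) hb c hp hq) z
  rw [← cutoffAction_min_one _ hab hb, ← cutoffAction_min_one (q.relSqDist z) hab hb]
  exact congrArg (cutoffAction a b) hmin

lemma cutoffAction_relSqDist_packingTwist (h : IsRotationPacking ζ a P) (hab : a < b) (hb : b ≤ 1)
    (c : ℝ) (hq : q ∈ P) (z : ℝ × ℝ) :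
    cutoffAction a b (q.relSqDist ((packingTwist P hab c).toFun z)) =
      cutoffAction a b (q.relSqDist z) := by
  rw [← cutoffAction_min_one _ hab hb, h.min_relSqDist_packingTwist hb c hq,
    cutoffAction_min_one _ hab hb]

lemma cutoffAction_relSqDist_unit_packingTwist (h : IsRotationPacking ζ a P) (hab : a < b)
    (hb : b ≤ 1) (c : ℝ) (z : ℝ × ℝ) :
    cutoffAction a b (unit.relSqDist ((packingTwist P hab c).toFun z)) =
      cutoffAction a b (unit.relSqDist z) := by
  rw [← cutoffAction_max _ hab, h.max_relSqDist_unit_packingTwist hb, cutoffAction_max _ hab]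

lemma isAction_packingTwist (h : IsRotationPacking ζ a P) (hb : b < 1) (c : ℝ) :
    IsAction (packingTwist P hab c).toFun (lambda0 + fderiv ℝ (packingPotential P b))
      fun z => c * ∑ p ∈ P, cutoffAction a b (p.relSqDist z) := by
  rw [packingTwist]
  convert IsAction.list_prod (L := P.toList)
    (fun p hp => h.isAction_cutoffTwist (hab := hab) hb c (Finset.mem_toList.1 hp))
    (fun q hq p hp => funext fun z => congrArg (c * ·) <| h.cutoffAction_relSqDist_cutoffTwist
      hab hb.le c (Finset.mem_toList.1 hp) (Finset.mem_toList.1 hq) z) using 1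
  rw [Finset.sum_map_toList]
  funext z
  rw [Finset.sum_apply, Finset.mul_sum]

lemma isAction_rotatedTwist (h : IsRotationPacking (Circle.exp θ) a P) (hb : b < 1) (c : ℝ) :
    IsAction (rotatedTwist P hab θ c).toFun (lambda0 + fderiv ℝ (packingPotential P b))
      (rotatedTwistAction P a b θ c) := by
  rw [rotatedTwist]
  convert (h.isAction_unit_cutoffTwist (hab := hab) hb).mul (h.isAction_packingTwist hb c) using 1
  funext z
  rw [Pi.add_apply, Function.comp_apply,
    h.cutoffAction_relSqDist_unit_packingTwist hab hb.le, rotatedTwistAction]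

lemma rotatedTwistAction_rotatedTwist (h : IsRotationPacking (Circle.exp θ) a P) (hb : b ≤ 1)
    (z : ℝ × ℝ) :
    rotatedTwistAction P a b θ c ((rotatedTwist P hab θ c).toFun z) =
      rotatedTwistAction P a b θ c z := by
  have hrotate (w : ℝ × ℝ) : ∑ p ∈ P,
      cutoffAction a b (p.relSqDist ((unit.cutoffTwist hab θ).toFun w)) =
        ∑ p ∈ P, cutoffAction a b (p.relSqDist w) :=
    congrFun (comp_unit_cutoffTwist (fun _ => h.sum_cutoffAction_eq_zero hab hb)
      (h.sum_cutoffAction_rotate a b)) w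
  rw [rotatedTwistAction, rotatedTwist, DiffC.mul_toFun, Function.comp_apply, hrotate,
    relSqDist_cutoffTwist, h.cutoffAction_relSqDist_unit_packingTwist hab hb,
    Finset.sum_congr rfl fun p hp => h.cutoffAction_relSqDist_packingTwist hab hb c hp z,
    rotatedTwistAction]

lemma rotatedTwist_eq_self (h : IsRotationPacking ζ a P) (hb : b ≤ 1) (hz : b ≤ unit.relSqDist z) :
    (rotatedTwist P hab θ c).toFun z = z := by
  have hout : (packingTwist P hab c).toFun z = z := packingTwist_eq_self fun p hp =>
    hb.trans (h.one_lt_relSqDist hp (hab.trans_le hz)).le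
  rw [rotatedTwist, DiffC.mul_toFun, Function.comp_apply, hout, cutoffTwist_eq_self _ _ _ hz]

lemma rotatedTwistAction_eq_zero (h : IsRotationPacking ζ a P) (hab : a < b) (hb : b ≤ 1)
    (θ c : ℝ) (hz : b ≤ unit.relSqDist z) : rotatedTwistAction P a b θ c z = 0 := by
  rw [rotatedTwistAction, cutoffAction_eq_zero hab hz,
    h.sum_cutoffAction_eq_zero hab hb (hab.trans_le hz), mul_zero, mul_zero, add_zero]

lemma relSqDist_smul_rotatedTwist (h : IsRotationPacking (Circle.exp θ) a P) (hb : b ≤ 1)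
    (hp : p ∈ P) (hz : p.relSqDist z < 1) :
    (Circle.exp θ • p).relSqDist ((rotatedTwist P hab θ c).toFun z) = p.relSqDist z := by
  set w := (packingTwist P hab c).toFun z
  have hmin : min (p.relSqDist w) 1 = p.relSqDist z :=
    (h.min_relSqDist_packingTwist hb c hp z).trans (min_eq_left hz.le)
  have hw : p.relSqDist w = p.relSqDist z := by
    rcases min_choice (p.relSqDist w) 1 with hmin' | hmin'
    · exact hmin'.symm.trans hmin
    · exact absurd (hmin'.symm.trans hmin) hz.ne'
  rw [rotatedTwist, DiffC.mul_toFun, Function.comp_apply,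
    unit_cutoffTwist_eq_rotate (h.relSqDist_unit_le hp (hw.trans_le hz.le)),
    relSqDist_smul_rotate, hw]

lemma relSqDist_pow_smul_iterate (h : IsRotationPacking (Circle.exp θ) a P) (hb : b ≤ 1)
    (hp : p ∈ P) (hz : p.relSqDist z < 1) (k : ℕ) :
    (Circle.exp θ ^ k • p).relSqDist ((rotatedTwist P hab θ c).toFun^[k] z) = p.relSqDist z := by
  induction k with
  | zero => rw [pow_zero, one_smul, Function.iterate_zero_apply]
  | succ k ih =>
    rw [pow_succ', mul_smul, Function.iterate_succ_apply',
      h.relSqDist_smul_rotatedTwist hb (h.pow_smul_mem hp k) (ih.trans_lt hz), ih]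

lemma dvd_of_iterate_eq_self {n : ℕ} (h : IsRotationPacking (Circle.exp θ) a P)
    (hθ : IsPrimitiveRoot (Circle.exp θ) n) (hb : b ≤ 1) (hp : p ∈ P) (hz : p.relSqDist z < 1)
    {k : ℕ} (hk : (rotatedTwist P hab θ c).toFun^[k] z = z) : n ∣ k := by
  have hzk := h.relSqDist_pow_smul_iterate (hab := hab) (c := c) hb hp hz k
  rw [hk] at hzk
  have hpk : Circle.exp θ ^ k • p = p :=
    h.eq_of_relSqDist_le_one (h.pow_smul_mem hp k) hp (hzk.trans_le hz.le) hz.le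
  refine (hθ.pow_eq_one_iff_dvd k).1 (Circle.ext ?_)
  rw [Circle.coe_one]
  exact (mul_eq_right₀ (h.center_ne_zero p hp)).1 (congrArg center hpk)

lemma one_le_relSqDist_unit_cutoffTwist (h : IsRotationPacking (Circle.exp θ) a P)
    (hz : ∀ p ∈ P, 1 ≤ p.relSqDist z) :
    ∀ p ∈ P, 1 ≤ p.relSqDist ((unit.cutoffTwist hab θ).toFun z) := by
  intro p hp
  rcases le_or_gt (unit.relSqDist z) a with hza | hza
  · rw [← h.map_toPerm] at hp
    obtain ⟨q, hq, rfl⟩ := Finset.mem_map.1 hp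
    rw [unit_cutoffTwist_eq_rotate hza]
    exact (hz q hq).trans_eq (relSqDist_smul_rotate q _ z).symm
  · exact (h.one_lt_relSqDist hp (hza.trans_eq (relSqDist_cutoffTwist unit hab θ).symm)).le

lemma rotatedTwist_iterate (h : IsRotationPacking (Circle.exp θ) a P) (hb : b ≤ 1)
    (hz : ∀ p ∈ P, 1 ≤ p.relSqDist z) (k : ℕ) :
    (rotatedTwist P hab θ c).toFun^[k] z = (unit.cutoffTwist hab θ).toFun^[k] z := by
  induction k generalizing z with
  | zero => rfl
  | succ k ih =>
    rw [Function.iterate_succ_apply, Function.iterate_succ_apply,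
      rotatedTwist_eq_unit_cutoffTwist hb hz, ih (h.one_le_relSqDist_unit_cutoffTwist hz)]

lemma one_le_relSqDist_of_rotatedTwist_eq_self {n : ℕ} (h : IsRotationPacking (Circle.exp θ) a P)
    (hθ : IsPrimitiveRoot (Circle.exp θ) n) (hn : n ≠ 1) (hb : b ≤ 1)
    (hz : (rotatedTwist P hab θ c).toFun z = z) : ∀ p ∈ P, 1 ≤ p.relSqDist z :=
  fun _ hp => le_of_not_gt fun hzp =>
    hn (Nat.dvd_one.1 (h.dvd_of_iterate_eq_self (k := 1) hθ hb hp hzp hz))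

lemma rotatedTwistAction_nonneg_of_eq_self {n : ℕ} (h : IsRotationPacking (Circle.exp θ) a P)
    (hθ : IsPrimitiveRoot (Circle.exp θ) n) (hn : n ≠ 1) (hθ₀ : 0 ≤ θ) (ha : 0 ≤ a) (hb : b ≤ 1)
    (hz : (rotatedTwist P hab θ c).toFun z = z) : 0 ≤ rotatedTwistAction P a b θ c z := by
  rw [rotatedTwistAction_of_one_le hab hb θ c
    (h.one_le_relSqDist_of_rotatedTwist_eq_self hθ hn hb hz)]
  exact mul_nonneg hθ₀ (cutoffAction_nonneg _ ha hab)

lemma le_of_rotatedTwist_iterate_eq_self {n : ℕ}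
    (h : IsRotationPacking (Circle.exp (2 * Real.pi / n)) a P) (hn : n ≠ 0) (hb : b ≤ 1) {k : ℕ}
    (hk : 0 < k) (hz : (rotatedTwist P hab (2 * Real.pi / n) c).toFun^[k] z = z)
    (hz₁ : (rotatedTwist P hab (2 * Real.pi / n) c).toFun z ≠ z) : n ≤ k := by
  by_cases hdisc : ∃ p ∈ P, p.relSqDist z < 1
  · obtain ⟨p, hp, hzp⟩ := hdisc
    exact Nat.le_of_dvd hk (h.dvd_of_iterate_eq_self (isPrimitiveRoot_circleExp hn) hb hp hzp hz)
  push Not at hdisc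
  rw [h.rotatedTwist_iterate hb hdisc] at hz
  rw [rotatedTwist_eq_unit_cutoffTwist hb hdisc] at hz₁
  refine le_of_not_gt fun hkn => hz₁ (unit_cutoffTwist_eq_self_of_iterate hk (by positivity) ?_ hz)
  rw [mul_div_left_comm]
  exact mul_lt_of_lt_one_right Real.two_pi_pos
    ((div_lt_one (Nat.cast_pos.2 (hk.trans hkn))).2 (Nat.cast_lt.2 hkn))

end IsRotationPacking

end RotatedTwist

end Disc

namespace Disc

section Calabi

lemma measurableSet_setOf_relSqDist_le (p : Disc) (s : ℝ) : MeasurableSet {z | p.relSqDist z ≤ s} :=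
  (p.isCompact_setOf_relSqDist_le s).measurableSet

lemma volume_real_setOf_relSqDist_le (p : Disc) {s : ℝ} (hs : 0 ≤ s) :
    volume.real {z | p.relSqDist z ≤ s} = s * (Real.pi * p.radius ^ 2) := by
  have hball : {z | p.relSqDist z ≤ s} = Complex.measurableEquivRealProd.symm ⁻¹'
      Metric.closedBall p.center (p.radius * √s) := by
    ext z
    change p.relSqDist z ≤ s ↔
      toComplex z ∈ Metric.closedBall p.center (p.radius * √s)
    rw [mem_closedBall_iff_norm, relSqDist, div_le_iff₀ p.radius_sq_pos,
      ← sq_le_sq₀ (norm_nonneg _) (by positivity [p.radius_pos]), mul_pow, Real.sq_sqrt hs,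
      mul_comm]
  rw [measureReal_def, hball, Complex.volume_preserving_equiv_real_prod.symm.measure_preimage
      Metric.isClosed_closedBall.measurableSet.nullMeasurableSet,
    volume_closedBall_eq_ofReal _ (by positivity [p.radius_pos]), mul_pow, Real.sq_sqrt hs,
    ENNReal.toReal_ofReal (by positivity)]
  ring

variable (p : Disc) {a b : ℝ}

lemma integrable_cutoffAction_relSqDist (hab : a < b) :
    Integrable fun z => cutoffAction a b (p.relSqDist z) :=
  ((contDiff_cutoffAction a b).comp p.contDiff_relSqDist).continuous.integrable_of_hasCompactSupport
    (HasCompactSupport.intro (p.isCompact_setOf_relSqDist_le b) fun _ hz =>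
      cutoffAction_eq_zero hab (not_le.1 hz).le)

lemma le_integral_cutoffAction_relSqDist (ha : 0 ≤ a) (hab : a < b) :
    cutoffAction a b a * (a * (Real.pi * p.radius ^ 2)) ≤
      ∫ z, cutoffAction a b (p.relSqDist z) := by
  calc cutoffAction a b a * (a * (Real.pi * p.radius ^ 2))
      = ∫ _ in {z | p.relSqDist z ≤ a}, cutoffAction a b a := by
        rw [setIntegral_const, p.volume_real_setOf_relSqDist_le ha, smul_eq_mul, mul_comm]
    _ = ∫ z in {z | p.relSqDist z ≤ a}, cutoffAction a b (p.relSqDist z) :=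
        setIntegral_congr_fun (p.measurableSet_setOf_relSqDist_le a) fun _ hz =>
          (cutoffAction_eq_of_le hab hz).symm
    _ ≤ ∫ z, cutoffAction a b (p.relSqDist z) :=
        setIntegral_le_integral (p.integrable_cutoffAction_relSqDist hab)
          (Filter.Eventually.of_forall fun _ => cutoffAction_nonneg _ ha hab)

lemma integral_cutoffAction_relSqDist_le (ha : 0 ≤ a) (hab : a < b) :
    ∫ z, cutoffAction a b (p.relSqDist z) ≤
      cutoffAction a b a * (b * (Real.pi * p.radius ^ 2)) := by
  have hb : 0 ≤ b := ha.trans hab.le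
  calc ∫ z, cutoffAction a b (p.relSqDist z)
      = ∫ z in {z | p.relSqDist z ≤ b}, cutoffAction a b (p.relSqDist z) :=
        (setIntegral_eq_integral_of_forall_compl_eq_zero fun _ hz =>
          cutoffAction_eq_zero hab (not_le.1 hz).le).symm
    _ ≤ ∫ _ in {z | p.relSqDist z ≤ b}, cutoffAction a b a :=
        setIntegral_mono (p.integrable_cutoffAction_relSqDist hab).integrableOn
          (integrableOn_const (p.isCompact_setOf_relSqDist_le b).measure_ne_top)
          fun _ => cutoffAction_le _ ha hab
    _ = cutoffAction a b a * (b * (Real.pi * p.radius ^ 2)) := by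
        rw [setIntegral_const, p.volume_real_setOf_relSqDist_le hb, smul_eq_mul, mul_comm]

section RotatedTwistAction

variable {θ c : ℝ}

lemma rotatedTwistAction_le (P : Finset Disc) (ha : 0 ≤ a) (hab : a < b) (hθ : 0 ≤ θ) (hc : c ≤ 0)
    (z : ℝ × ℝ) : rotatedTwistAction P a b θ c z ≤ θ * cutoffAction a b a :=
  add_le_of_le_of_nonpos (mul_le_mul_of_nonneg_left (cutoffAction_le _ ha hab) hθ)
    (mul_nonpos_of_nonpos_of_nonneg hc (Finset.sum_nonneg fun _ _ => cutoffAction_nonneg _ ha hab))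

lemma integrable_rotatedTwistAction (P : Finset Disc) (hab : a < b) (θ c : ℝ) :
    Integrable (rotatedTwistAction P a b θ c) :=
  ((unit.integrable_cutoffAction_relSqDist hab).const_mul θ).add
    ((integrable_finsetSum P fun p _ => p.integrable_cutoffAction_relSqDist hab).const_mul c)

lemma integral_rotatedTwistAction (P : Finset Disc) (hab : a < b) (θ c : ℝ) :
    ∫ z, rotatedTwistAction P a b θ c z =
      θ * (∫ z, cutoffAction a b (unit.relSqDist z)) +
        c * ∑ p ∈ P, ∫ z, cutoffAction a b (p.relSqDist z) := by
  have hint (p : Disc) := p.integrable_cutoffAction_relSqDist hab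
  simp only [rotatedTwistAction]
  rw [integral_add ((hint unit).const_mul θ)
      ((integrable_finsetSum P fun p _ => hint p).const_mul c),
    integral_const_mul, integral_const_mul, integral_finsetSum P fun p _ => hint p]

lemma integral_rotatedTwistAction_le (P : Finset Disc) (ha : 0 ≤ a) (hab : a < b) (hθ : 0 ≤ θ)
    (hc : c ≤ 0) :
    ∫ z, rotatedTwistAction P a b θ c z ≤ cutoffAction a b a *
      (θ * (b * Real.pi) + c * (a * ∑ p ∈ P, Real.pi * p.radius ^ 2)) := by
  have hunit := unit.integral_cutoffAction_relSqDist_le ha hab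
  have hsum := Finset.sum_le_sum fun p (_ : p ∈ P) => p.le_integral_cutoffAction_relSqDist ha hab
  rw [unit_radius, one_pow, mul_one] at hunit
  rw [← Finset.mul_sum, ← Finset.mul_sum] at hsum
  rw [integral_rotatedTwistAction P hab]
  linarith [mul_le_mul_of_nonneg_left hunit hθ, mul_le_mul_of_nonpos_left hsum hc]

lemma integral_rotatedTwistAction_le_of_area {δ : ℝ} (P : Finset Disc) (hδ : 0 ≤ δ) (hδ₁ : δ ≤ 1)
    (hab : 1 - δ < b) (hb : b ≤ 1) (hθ : 0 ≤ θ) (hc : c ≤ 0)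
    (hcπ : -(c * cutoffAction (1 - δ) b (1 - δ)) ≤ Real.pi)
    (hA : Real.pi * (1 - δ) - δ ≤ ∑ p ∈ P, Real.pi * p.radius ^ 2) :
    ∫ z, rotatedTwistAction P (1 - δ) b θ c z ≤
      (θ + c) * cutoffAction (1 - δ) b (1 - δ) * Real.pi + Real.pi * ((2 * Real.pi + 1) * δ) := by
  have ha : 0 ≤ 1 - δ := sub_nonneg.2 hδ₁
  set T := cutoffAction (1 - δ) b (1 - δ)
  set A := ∑ p ∈ P, Real.pi * p.radius ^ 2
  have hT : 0 ≤ T := cutoffAction_nonneg _ ha hab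
  have hπ := Real.pi_pos
  have harea : Real.pi - (2 * Real.pi + 1) * δ ≤ (1 - δ) * A :=
    calc Real.pi - (2 * Real.pi + 1) * δ
        ≤ Real.pi - (2 * Real.pi + 1) * δ + (Real.pi + 1) * δ ^ 2 :=
          le_add_of_nonneg_right (by positivity)
      _ = (1 - δ) * (Real.pi * (1 - δ) - δ) := by ring
      _ ≤ (1 - δ) * A := mul_le_mul_of_nonneg_left hA ha
  calc ∫ z, rotatedTwistAction P (1 - δ) b θ c z
      ≤ T * (θ * (b * Real.pi) + c * ((1 - δ) * A)) :=
        integral_rotatedTwistAction_le P ha hab hθ hc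
    _ ≤ T * (θ * Real.pi + c * (Real.pi - (2 * Real.pi + 1) * δ)) := by
        gcongr T * (θ * ?_ + ?_)
        · exact mul_le_of_le_one_left hπ.le hb
        · exact mul_le_mul_of_nonpos_left harea hc
    _ = (θ + c) * T * Real.pi + -(c * T) * ((2 * Real.pi + 1) * δ) := by ring
    _ ≤ (θ + c) * T * Real.pi + Real.pi * ((2 * Real.pi + 1) * δ) := by gcongr

end RotatedTwistAction

namespace IsRotationPacking

variable {P : Finset Disc} {ζ : Circle} {θ c : ℝ}

lemma le_rotatedTwistAction (h : IsRotationPacking ζ a P) (ha : 0 ≤ a) (hab : a < b) (hb : b ≤ 1)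
    (hθ : 0 ≤ θ) (hc : θ + c ≤ 0) (z : ℝ × ℝ) :
    (θ + c) * cutoffAction a b a ≤ rotatedTwistAction P a b θ c z := by
  by_cases hdisc : ∃ p ∈ P, p.relSqDist z ≤ 1
  · obtain ⟨p, hp, hzp⟩ := hdisc
    rw [rotatedTwistAction, h.sum_cutoffAction_eq hab hb hp hzp,
      cutoffAction_eq_of_le hab (h.relSqDist_unit_le hp hzp), add_mul]
    exact add_le_add_right (mul_le_mul_of_nonpos_left (cutoffAction_le _ ha hab) (by linarith)) _
  · push Not at hdisc
    rw [rotatedTwistAction_of_one_le hab hb θ c fun p hp => (hdisc p hp).le]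
    exact (mul_nonpos_of_nonpos_of_nonneg hc (cutoffAction_nonneg _ ha hab)).trans
      (mul_nonneg hθ (cutoffAction_nonneg _ ha hab))

lemma le_integral_rotatedTwistAction (h : IsRotationPacking ζ a P) (ha : 0 ≤ a) (hab : a < b)
    (hb : b ≤ 1) (hθ : 0 ≤ θ) (hc : θ + c ≤ 0) :
    (θ + c) * cutoffAction a b a * (b * Real.pi) ≤ ∫ z, rotatedTwistAction P a b θ c z := by
  have hb₀ : 0 ≤ b := ha.trans hab.le
  calc (θ + c) * cutoffAction a b a * (b * Real.pi)
      = ∫ _ in {z | unit.relSqDist z ≤ b}, (θ + c) * cutoffAction a b a := by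
        rw [setIntegral_const, unit.volume_real_setOf_relSqDist_le hb₀, unit_radius, one_pow,
          mul_one, smul_eq_mul, mul_comm]
    _ ≤ ∫ z in {z | unit.relSqDist z ≤ b}, rotatedTwistAction P a b θ c z :=
        setIntegral_mono
          (integrableOn_const (unit.isCompact_setOf_relSqDist_le b).measure_ne_top)
          (integrable_rotatedTwistAction P hab θ c).integrableOn
          (h.le_rotatedTwistAction ha hab hb hθ hc)
    _ = ∫ z, rotatedTwistAction P a b θ c z :=
        setIntegral_eq_integral_of_forall_compl_eq_zero fun _ hz =>
          h.rotatedTwistAction_eq_zero hab hb θ c (not_le.1 hz).le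

lemma lt_integral_rotatedTwistAction {X : ℝ} (h : IsRotationPacking ζ a P) (ha : 0 ≤ a)
    (hab : a < b) (hb : b ≤ 1) (hθ : 0 ≤ θ) (hc : θ + c ≤ 0)
    (hX : X < (θ + c) * cutoffAction a b a) :
    X * Real.pi < ∫ z, rotatedTwistAction P a b θ c z :=
  calc X * Real.pi < (θ + c) * cutoffAction a b a * Real.pi :=
        mul_lt_mul_of_pos_right hX Real.pi_pos
    _ ≤ (θ + c) * cutoffAction a b a * (b * Real.pi) :=
        mul_le_mul_of_nonpos_left (mul_le_of_le_one_left Real.pi_pos.le hb)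
          (mul_nonpos_of_nonpos_of_nonneg hc (cutoffAction_nonneg _ ha hab))
    _ ≤ ∫ z, rotatedTwistAction P a b θ c z := h.le_integral_rotatedTwistAction ha hab hb hθ hc

end IsRotationPacking

lemma exists_isRotationPacking_lt_sum_area {n : ℕ} (hn : n ≠ 0) (ha : 0 ≤ a) {A : ℝ}
    (hA : A < Real.pi * a) :
    ∃ P : Finset Disc, IsRotationPacking (Circle.exp (2 * Real.pi / n)) a P ∧
      A < ∑ p ∈ P, Real.pi * p.radius ^ 2 := by
  have hn₀ : (0 : ℝ) < n := Nat.cast_pos.2 (Nat.pos_of_ne_zero hn)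
  have hvol : volume.real (sector √a (Real.pi / n)) = a * (Real.pi / n) := by
    rw [volume_real_sector (Real.sqrt_nonneg a) (by positivity) (div_le_self Real.pi_pos.le
      (Nat.one_le_cast.2 (Nat.pos_of_ne_zero hn))), Real.sq_sqrt ha]
  have hc : A / n < volume.real (sector √a (Real.pi / n)) := by
    rw [hvol, mul_div_left_comm, ← mul_div_assoc]
    exact div_lt_div_of_pos_right hA hn₀
  obtain ⟨P, hP, hsum⟩ := exists_isRotationPacking (Nat.pos_of_ne_zero hn)
    (isPrimitiveRoot_circleExp hn) (isOpen_sector _ _)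
    (fun h0 => (norm_mem_of_mem_sector h0).1.ne' norm_zero) (injOn_pow_sector hn √a)
    (fun z hz => (Real.le_sqrt (norm_nonneg z) ha).1 (norm_mem_of_mem_sector hz).2.le) hc
  exact ⟨P, hP, by rwa [mul_div_cancel₀ A hn₀.ne'] at hsum⟩

lemma two_pi_div_mul_cutoffAction_lt {n : ℕ} (hn : n ≠ 0) (hab : a < b) (hb : b < 1) :
    2 * Real.pi / n * cutoffAction a b a < Real.pi / n :=
  calc 2 * Real.pi / n * cutoffAction a b a
      ≤ 2 * Real.pi / n * (b / 2) :=
        mul_le_mul_of_nonneg_left (cutoffAction_le_half hab) (by positivity)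
    _ = Real.pi / n * b := by ring
    _ < Real.pi / n := mul_lt_of_lt_one_right (by positivity) hb

lemma exists_twist_coefficient {n : ℕ} (hn : 2 ≤ n) (ha : 0 < a) (hab : a < b) {δ : ℝ}
    (hδ : δ ≤ 1) :
    ∃ c, (2 * Real.pi / n + c) * cutoffAction a b a = -Real.pi + Real.pi / n + δ ∧
      2 * Real.pi / n + c ≤ 0 := by
  have hT : 0 < cutoffAction a b a := (half_pos ha).trans_le (half_le_cutoffAction hab)
  have hhalf : Real.pi / n ≤ Real.pi / 2 :=
    div_le_div_of_nonneg_left Real.pi_pos.le two_pos (Nat.ofNat_le_cast.2 hn)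
  refine ⟨(-Real.pi + Real.pi / n + δ) / cutoffAction a b a - 2 * Real.pi / n, ?_, ?_⟩
  · rw [add_sub_cancel, div_mul_cancel₀ _ hT.ne']
  · rw [add_sub_cancel]
    exact div_nonpos_of_nonpos_of_nonneg (by linarith [Real.pi_gt_three]) hT.le

lemma exists_isRotationPacking_integral_rotatedTwistAction_lt {n : ℕ} (hn : 2 ≤ n) {ε : ℝ}
    (hε : 0 < ε) :
    ∃ (P : Finset Disc) (a b c : ℝ), 0 ≤ a ∧ a < b ∧ b < 1 ∧
      IsRotationPacking (Circle.exp (2 * Real.pi / n)) a P ∧ 2 * Real.pi / n + c ≤ 0 ∧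
      -Real.pi + Real.pi / n < (2 * Real.pi / n + c) * cutoffAction a b a ∧
      ∫ z, rotatedTwistAction P a b (2 * Real.pi / n) c z < -Real.pi ^ 2 * (1 - 1 / n) + ε := by
  have hn₀ : n ≠ 0 := by lia
  have hθ : 0 ≤ 2 * Real.pi / n := by positivity
  obtain ⟨δ, hδ, hδmin⟩ := exists_between
    (lt_min one_pos (by positivity : 0 < ε / (2 * Real.pi * (Real.pi + 1))))
  obtain ⟨hδ₁, hδε⟩ := lt_min_iff.1 hδmin
  rw [lt_div_iff₀ (by positivity)] at hδε
  have ha : 0 < 1 - δ := sub_pos.2 hδ₁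
  have hab : 1 - δ < 1 - δ / 2 := by linarith
  have hb : 1 - δ / 2 < 1 := by linarith
  obtain ⟨P, hP, hA⟩ := exists_isRotationPacking_lt_sum_area hn₀ ha.le
    (sub_lt_self (Real.pi * (1 - δ)) hδ)
  obtain ⟨c, hc, hθc⟩ := exists_twist_coefficient hn ha hab hδ₁.le
  have hT := two_pi_div_mul_cutoffAction_lt hn₀ hab hb
  have hupper := integral_rotatedTwistAction_le_of_area (c := c) P hδ.le hδ₁.le hab hb.le hθ
    (by linarith) (by linarith) hA.le
  rw [hc] at hupper
  refine ⟨P, 1 - δ, 1 - δ / 2, c, ha.le, hab, hb, hP, hθc, hc ▸ lt_add_of_pos_right _ hδ, ?_⟩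
  linear_combination hupper + hδε

end Calabi

end Disc

/-- Proposition 2.6 (parts (i), (ii), (iv), (v)): for every `n ≥ 2` and `ε > 0` there are
a primitive `λ` of `ω₀` with `λ − λ₀` supported in a compact subset of the open unit
disk, and `φ ∈ Diff_c(𝔻,ω₀)` with action `σ_{φ,λ}` such that:
(i) `−π + π/n < σ_{φ,λ} < π/n` everywhere and `σ_{φ,λ} ≥ 0` at fixed points of `φ`;
(ii) `−π²(1−1/n) < CAL(φ) < −π²(1−1/n) + ε`;
(iii) `σ_{φ,λ} ∘ φ = σ_{φ,λ}`;
(iv) periodic points of `φ` that are not fixed points have period at least `n`. -/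
theorem statement19 (n : ℕ) (hn : 2 ≤ n) (ε : ℝ) (hε : 0 < ε) :
    ∃ (l : OneForm) (φ : DiffC) (σ : ℝ × ℝ → ℝ),
      IsPrimitive l ∧
      (∃ K : Set (ℝ × ℝ), IsCompact K ∧ K ⊆ openDisk ∧ ∀ z ∉ K, l z = lambda0 z) ∧
      (∃ K : Set (ℝ × ℝ), IsCompact K ∧ K ⊆ openDisk ∧ ∀ z ∉ K, φ.toFun z = z) ∧
      IsAction φ.toFun l σ ∧
      (∀ z, -Real.pi + Real.pi / n < σ z ∧ σ z < Real.pi / n) ∧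
      (∀ z₀, φ.toFun z₀ = z₀ → 0 ≤ σ z₀) ∧
      (-Real.pi ^ 2 * (1 - 1 / n) < ∫ z : ℝ × ℝ, σ z ∧
        (∫ z : ℝ × ℝ, σ z) < -Real.pi ^ 2 * (1 - 1 / n) + ε) ∧
      (∀ z, σ (φ.toFun z) = σ z) ∧
      (∀ k : ℕ, 0 < k → ∀ z₀, φ.toFun^[k] z₀ = z₀ → φ.toFun z₀ ≠ z₀ → n ≤ k) := by
  obtain ⟨P, a, b, c, ha, hab, hb, hP, hθc, hX, hupper⟩ :=
    Disc.exists_isRotationPacking_integral_rotatedTwistAction_lt hn hε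
  have hn₀ : n ≠ 0 := by lia
  have hθ : 0 ≤ 2 * Real.pi / n := by positivity
  have hc : c ≤ 0 := by linarith
  have hlower := hP.lt_integral_rotatedTwistAction ha hab hb.le hθ hθc hX
  have hK := Disc.setOf_relSqDist_unit_le_subset_openDisk hb
  exact ⟨_, Disc.rotatedTwist P hab _ c, Disc.rotatedTwistAction P a b _ c,
    isPrimitive_lambda0.add_fderiv (Disc.contDiff_packingPotential P b),
    ⟨_, Disc.unit.isCompact_setOf_relSqDist_le b, hK, fun _ hz =>
      hP.lambda0_add_fderiv_packingPotential hb (hab.trans (not_le.1 hz))⟩,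
    ⟨_, Disc.unit.isCompact_setOf_relSqDist_le b, hK, fun _ hz =>
      hP.rotatedTwist_eq_self hb.le (not_le.1 hz).le⟩,
    hP.isAction_rotatedTwist hb c,
    fun z => ⟨hX.trans_le (hP.le_rotatedTwistAction ha hab hb.le hθ hθc z),
      (Disc.rotatedTwistAction_le P ha hab hθ hc z).trans_lt
        (Disc.two_pi_div_mul_cutoffAction_lt hn₀ hab hb)⟩,
    fun _ => hP.rotatedTwistAction_nonneg_of_eq_self (isPrimitiveRoot_circleExp hn₀)
      (by lia) hθ ha hb.le,
    ⟨by linear_combination hlower, hupper⟩,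
    hP.rotatedTwistAction_rotatedTwist hb.le,
    fun _ hk _ => hP.le_of_rotatedTwist_iterate_eq_self hn₀ hb.le hk⟩
end
end
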